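/- Let (c₁,c₂) ∈ ℝ². The operator τ₂(c₁,c₂) restricted to C₀^∞((0,∞)) is essentially self-adjoint in L²((0,∞); dr) if and only if c₂ ≥ 45 + 12c₁ + c₁² when c₁ ≥ −11/4, and c₂ ≥ −105/16 − (19/2)c₁ when c₁ < −11/4. -/

import Mathlib

open MeasureTheory

noncomputable section

/-- A densely defined operator `T` in a complex Hilbert space is *essentially self-adjoint*
if its adjoint `T*` is self-adjoint (equivalently, its closure is self-adjoint). -/
def EssentiallySelfAdjoint {H : Type*} [NormedAddCommGroup H] [InnerProductSpace ℂ H]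
    [CompleteSpace H] (T : H →ₗ.[ℂ] H) : Prop :=
  Dense (T.domain : Set H) ∧ IsSelfAdjoint T.adjoint

/-- Lebesgue measure on `(0,∞)`. -/
def lebIoi : Measure ℝ := volume.restrict (Set.Ioi 0)

/-- The graph of the operator given by a formal differential expression `L` with domain
`C₀^∞((0,∞))`, as a subspace of `L²((0,∞); dr) × L²((0,∞); dr)`. -/
def graphOnHalfLine (L : (ℝ → ℂ) → (ℝ → ℂ)) : Submodule ℂ (Lp ℂ 2 lebIoi × Lp ℂ 2 lebIoi) :=
  Submodule.span ℂ {p | ∃ φ : ℝ → ℂ, ContDiff ℝ (⊤ : ℕ∞) φ ∧ HasCompactSupport φ ∧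
    tsupport φ ⊆ Set.Ioi 0 ∧
    (p.1 : ℝ → ℂ) =ᵐ[lebIoi] φ ∧ (p.2 : ℝ → ℂ) =ᵐ[lebIoi] L φ}

/-- The operator in `L²((0,∞); dr)` given by a formal differential expression `L`
with domain `C₀^∞((0,∞))`. -/
def opOnHalfLine (L : (ℝ → ℂ) → (ℝ → ℂ)) : Lp ℂ 2 lebIoi →ₗ.[ℂ] Lp ℂ 2 lebIoi :=
  (graphOnHalfLine L).toLinearPMap

/-- The differential expression `τ₂(c₁,c₂) = d⁴/dr⁴ + c₁ (r⁻² d²/dr² + d²/dr² r⁻²) + c₂ r⁻⁴`. -/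
def tau2exp (c₁ c₂ : ℝ) (φ : ℝ → ℂ) : ℝ → ℂ := fun r =>
  deriv (deriv (deriv (deriv φ))) r
    + (c₁ : ℂ) * (((r : ℂ) ^ 2)⁻¹ * deriv (deriv φ) r
        + deriv (deriv (fun s : ℝ => ((s : ℂ) ^ 2)⁻¹ * φ s)) r)
    + (c₂ : ℂ) * ((r : ℂ) ^ 4)⁻¹ * φ r

/-- The operator `τ₂(c₁,c₂)|_{C₀^∞((0,∞))}` in `L²((0,∞); dr)`. -/
def tau2op (c₁ c₂ : ℝ) : Lp ℂ 2 lebIoi →ₗ.[ℂ] Lp ℂ 2 lebIoi :=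
  opOnHalfLine (tau2exp c₁ c₂)

open Filter Topology
open scoped Convolution ENNReal ComplexConjugate

/-- The constant-coefficient differential expression `d⁴/dt⁴ + a d²/dt² + b`. -/
def polyD (a b : ℝ) (ψ : ℝ → ℂ) : ℝ → ℂ := fun t =>
  deriv (deriv (deriv (deriv ψ))) t + a * deriv (deriv ψ) t + b * ψ t

/-- The boundary form associated with `polyD a b`. -/
def bdryForm (a : ℝ) (g h : ℝ → ℂ) : ℝ → ℂ := fun t =>
  deriv (deriv (deriv g)) t * h t - deriv (deriv g) t * deriv h t
    + deriv g t * deriv (deriv h) t - g t * deriv (deriv (deriv h)) t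
    + a * (deriv g t * h t - g t * deriv h t)

lemma contDiff_top_deriv {g : ℝ → ℂ} (hg : ContDiff ℝ (⊤ : ℕ∞) g) :
    ContDiff ℝ (⊤ : ℕ∞) (deriv g) := (contDiff_infty_iff_deriv.1 hg).2

lemma contDiff_top_hasDerivAt {g : ℝ → ℂ} (hg : ContDiff ℝ (⊤ : ℕ∞) g) (t : ℝ) :
    HasDerivAt g (deriv g t) t := ((contDiff_infty_iff_deriv.1 hg).1 t).hasDerivAt

lemma continuous_polyD (a b : ℝ) {g : ℝ → ℂ} (hg : ContDiff ℝ (⊤ : ℕ∞) g) :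
    Continuous (polyD a b g) := by
  have h1 := contDiff_top_deriv hg
  have h2 := contDiff_top_deriv h1
  have h3 := contDiff_top_deriv h2
  have h4 := contDiff_top_deriv h3
  have c0 := hg.continuous
  have c2 := h2.continuous
  have c4 := h4.continuous
  unfold polyD
  fun_prop

lemma hasDerivAt_bdryForm (a b : ℝ) {g h : ℝ → ℂ} (hg : ContDiff ℝ (⊤ : ℕ∞) g)
    (hh : ContDiff ℝ (⊤ : ℕ∞) h) (t : ℝ) :
    HasDerivAt (bdryForm a g h) (polyD a b g t * h t - g t * polyD a b h t) t := by
  have g1 := contDiff_top_deriv hg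
  have g2 := contDiff_top_deriv g1
  have g3 := contDiff_top_deriv g2
  have h1 := contDiff_top_deriv hh
  have h2 := contDiff_top_deriv h1
  have h3 := contDiff_top_deriv h2
  have dg := contDiff_top_hasDerivAt hg t
  have dg1 := contDiff_top_hasDerivAt g1 t
  have dg2 := contDiff_top_hasDerivAt g2 t
  have dg3 := contDiff_top_hasDerivAt g3 t
  have dh := contDiff_top_hasDerivAt hh t
  have dh1 := contDiff_top_hasDerivAt h1 t
  have dh2 := contDiff_top_hasDerivAt h2 t
  have dh3 := contDiff_top_hasDerivAt h3 t
  have := ((((dg3.mul dh).sub (dg2.mul dh1)).add (dg1.mul dh2)).sub (dg.mul dh3)).add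
    (((dg1.mul dh).sub (dg.mul dh1)).const_mul (a : ℂ))
  refine this.congr_deriv ?_
  simp only [polyD]
  ring

lemma hasDerivAt_cexp_mul (z : ℂ) (t : ℝ) :
    HasDerivAt (fun s : ℝ => Complex.exp (z * s)) (z * Complex.exp (z * t)) t := by
  have h : HasDerivAt (fun s : ℝ => z * (s : ℂ)) z t := by
    simpa using (Complex.ofRealCLM.hasDerivAt (x := t)).const_mul z
  refine h.cexp.congr_deriv (by ring)

/-- Estimate on `[s, t]` for a function with derivative `z y + k`. -/
lemma norm_exp_sub_le {z : ℂ} {y k : ℝ → ℂ} (hy : ∀ t, HasDerivAt y (z * y t + k t) t)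
    (hz : z.re ≠ 0) {ε s t : ℝ} (hst : s ≤ t) (hk : ∀ x ≤ t, ‖k x‖ ≤ ε) :
    ‖Complex.exp (-z * t) * y t - Complex.exp (-z * s) * y s‖
      ≤ ε * (Real.exp (-z.re * t) - Real.exp (-z.re * s)) / (-z.re) := by
  have hd : ∀ x : ℝ, HasDerivAt (fun x : ℝ => Complex.exp (-z * x) * y x
      - Complex.exp (-z * s) * y s) (Complex.exp (-z * x) * k x) x := by
    intro x
    refine (((hasDerivAt_cexp_mul (-z) x).mul (hy x)).sub_const _).congr_deriv ?_
    ring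
  have hB : ∀ x : ℝ, HasDerivAt (fun x : ℝ => ε * (Real.exp (-z.re * x) - Real.exp (-z.re * s))
      / (-z.re)) (ε * Real.exp (-z.re * x)) x := by
    intro x
    have h1 : HasDerivAt (fun x : ℝ => -z.re * x) (-z.re) x := by
      simpa using (hasDerivAt_id x).const_mul (-z.re)
    refine (((h1.exp.sub_const _).const_mul ε).div_const _).congr_deriv ?_
    field_simp
  refine image_norm_le_of_norm_deriv_right_le_deriv_boundary
    (f' := fun x => Complex.exp (-z * x) * k x)
    (fun x _ => (hd x).continuousAt.continuousWithinAt)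
    (fun x _ => (hd x).hasDerivWithinAt) (by simp) hB ?_ (Set.right_mem_Icc.2 hst)
  intro x hx
  rw [norm_mul, Complex.norm_exp, mul_comm ε]
  simp only [neg_mul, Complex.neg_re, Complex.mul_re, Complex.ofReal_re, Complex.ofReal_im,
    mul_zero, sub_zero]
  exact mul_le_mul_of_nonneg_left (hk x hx.2.le) (Real.exp_pos _).le

/-- If `dy/dt - z y` tends to zero at `-∞` with `|Re z| ≥ 2` and `e^{2t} y` tends to zero, then so
does `y`. -/
lemma tendsto_zero_of_first_order {z : ℂ} {y k : ℝ → ℂ}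
    (hy : ∀ t, HasDerivAt y (z * y t + k t) t) (hz : 2 ≤ z.re ∨ z.re ≤ -2)
    (hk : Tendsto k atBot (𝓝 0))
    (hy0 : Tendsto (fun t : ℝ => Complex.exp (2 * t) * y t) atBot (𝓝 0)) :
    Tendsto y atBot (𝓝 0) := by
  rw [Metric.tendsto_nhds]
  intro ε hε
  obtain ⟨T, hT⟩ := eventually_atBot.1 ((Metric.tendsto_nhds.1 hk) ε hε)
  have hkT : ∀ x ≤ T, ‖k x‖ ≤ ε := fun x hx => by simpa using (hT x hx).le
  have hnorm : ∀ (w : ℂ) (x : ℝ), ‖Complex.exp (-w * x)‖ = Real.exp (-w.re * x) := by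
    intro w x
    rw [Complex.norm_exp]; simp
  rcases hz with hz | hz
  · have hlim : Tendsto (fun t : ℝ => Real.exp (z.re * (t - T)) * ‖y T‖) atBot (𝓝 0) := by
      have : Tendsto (fun t : ℝ => Real.exp (z.re * (t - T))) atBot (𝓝 0) :=
        Real.tendsto_exp_atBot.comp
          ((tendsto_atBot_add_const_right _ (-T) tendsto_id).const_mul_atBot (by linarith))
      simpa using this.mul_const ‖y T‖
    filter_upwards [(Metric.tendsto_nhds.1 hlim) (ε / 2) (by positivity), eventually_le_atBot T]
      with t ht htT
    have h := norm_exp_sub_le hy (by linarith) htT hkT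
    have h1 : Real.exp (-z.re * t) * ‖y t‖ ≤ Real.exp (-z.re * T) * ‖y T‖
        + ε * (Real.exp (-z.re * T) - Real.exp (-z.re * t)) / (-z.re) := by
      have := norm_sub_norm_le (Complex.exp (-z * t) * y t) (Complex.exp (-z * T) * y T)
      rw [norm_sub_rev, norm_mul, norm_mul, hnorm, hnorm] at this
      linarith
    have h2 : ε * (Real.exp (-z.re * T) - Real.exp (-z.re * t)) / (-z.re)
        ≤ ε / 2 * Real.exp (-z.re * t) := by
      rw [div_le_iff_of_neg (by linarith)]
      have e1 := Real.exp_pos (-z.re * T)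
      have e2 := Real.exp_pos (-z.re * t)
      have : 0 ≤ (z.re - 2) * (ε * Real.exp (-z.re * t)) := by
        have := mul_pos hε e2
        nlinarith
      nlinarith [mul_pos hε e1]
    have h3 : Real.exp (-z.re * T) = Real.exp (z.re * (t - T)) * Real.exp (-z.re * t) := by
      rw [← Real.exp_add]; ring_nf
    rw [h3] at h1
    have h4 : ‖y t‖ ≤ Real.exp (z.re * (t - T)) * ‖y T‖ + ε / 2 := by
      have e2 := Real.exp_pos (-z.re * t)
      refine le_of_mul_le_mul_left ?_ e2
      rw [h3] at h2
      linarith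
    rw [Real.dist_eq, sub_zero] at ht
    have := le_abs_self (Real.exp (z.re * (t - T)) * ‖y T‖)
    simp only [dist_zero_right]
    linarith
  · filter_upwards [eventually_le_atBot T] with t htT
    have hlim : Tendsto (fun s : ℝ => Real.exp (-z.re * s) * ‖y s‖) atBot (𝓝 0) := by
      refine tendsto_of_tendsto_of_tendsto_of_le_of_le' tendsto_const_nhds
        (by simpa using hy0.norm) (Eventually.of_forall fun s => by positivity) ?_
      filter_upwards [eventually_le_atBot 0] with s hs
      have : ‖Complex.exp (2 * (s : ℂ))‖ = Real.exp (2 * s) := by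
        rw [Complex.norm_exp]; simp
      rw [this]
      exact mul_le_mul_of_nonneg_right (Real.exp_le_exp.2 (by nlinarith)) (norm_nonneg _)
    have hle : Real.exp (-z.re * t) * ‖y t‖ ≤ ε * Real.exp (-z.re * t) / (-z.re) + 0 := by
      refine ge_of_tendsto (tendsto_const_nhds.add hlim) ?_
      filter_upwards [eventually_le_atBot t] with s hs
      have h := norm_exp_sub_le hy (by linarith) hs (fun x hx => hkT x (hx.trans htT))
      have := norm_sub_norm_le (Complex.exp (-z * t) * y t) (Complex.exp (-z * s) * y s)
      rw [norm_mul, norm_mul, hnorm, hnorm] at this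
      have h5 : ε * (Real.exp (-z.re * t) - Real.exp (-z.re * s)) / (-z.re)
          ≤ ε * Real.exp (-z.re * t) / (-z.re) := by
        have : 0 < -z.re := by linarith
        gcongr
        linarith [Real.exp_pos (-z.re * s)]
      linarith
    have e2 := Real.exp_pos (-z.re * t)
    have h6 : ε * Real.exp (-z.re * t) / (-z.re) ≤ ε / 2 * Real.exp (-z.re * t) := by
      rw [div_le_iff₀ (by linarith)]
      nlinarith [mul_pos hε e2]
    have h7 : ‖y t‖ ≤ ε / 2 := by
      refine le_of_mul_le_mul_left ?_ e2
      linarith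
    simp only [dist_zero_right]
    linarith

/-- Decay at `-∞` of all derivatives up to order three. -/
lemma tendsto_zero_of_polyD {a b : ℝ} {p q : ℂ} (hp : 2 ≤ p.re) (hq : 2 ≤ q.re)
    (ha : (a : ℂ) = -(p ^ 2 + q ^ 2)) (hb : (b : ℂ) = p ^ 2 * q ^ 2) {g : ℝ → ℂ}
    (hg : ContDiff ℝ (⊤ : ℕ∞) g)
    (h0 : Tendsto (fun t : ℝ => Complex.exp (2 * t) * g t) atBot (𝓝 0))
    (h1 : Tendsto (fun t : ℝ => Complex.exp (2 * t) * deriv g t) atBot (𝓝 0))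
    (h2 : Tendsto (fun t : ℝ => Complex.exp (2 * t) * deriv (deriv g) t) atBot (𝓝 0))
    (h3 : Tendsto (fun t : ℝ => Complex.exp (2 * t) * deriv (deriv (deriv g)) t) atBot (𝓝 0))
    (hk : Tendsto (polyD a b g) atBot (𝓝 0)) :
    Tendsto g atBot (𝓝 0) ∧ Tendsto (deriv g) atBot (𝓝 0) ∧
      Tendsto (deriv (deriv g)) atBot (𝓝 0) ∧
      Tendsto (deriv (deriv (deriv g))) atBot (𝓝 0) := by
  have g1 := contDiff_top_deriv hg
  have g2 := contDiff_top_deriv g1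
  have g3 := contDiff_top_deriv g2
  have dg := contDiff_top_hasDerivAt hg
  have dg1 := contDiff_top_hasDerivAt g1
  have dg2 := contDiff_top_hasDerivAt g2
  have dg3 := contDiff_top_hasDerivAt g3
  have t3 : Tendsto (fun t => deriv (deriv (deriv g)) t - p * deriv (deriv g) t
      - q ^ 2 * deriv g t + p * q ^ 2 * g t) atBot (𝓝 0) := by
    refine tendsto_zero_of_first_order (z := -p) (k := polyD a b g) (fun t => ?_)
      (Or.inr (by simpa using hp)) hk ?_
    · refine ((((dg3 t).sub ((dg2 t).const_mul p)).sub ((dg1 t).const_mul (q ^ 2))).add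
        ((dg t).const_mul (p * q ^ 2))).congr_deriv ?_
      simp only [polyD, ha, hb]; ring
    · have := ((h3.sub (h2.const_mul p)).sub (h1.const_mul (q ^ 2))).add (h0.const_mul (p * q ^ 2))
      simp only [mul_zero, sub_zero, add_zero] at this
      refine this.congr fun t => ?_
      ring
  have t2 : Tendsto (fun t => deriv (deriv g) t - (p + q) * deriv g t + p * q * g t)
      atBot (𝓝 0) := by
    refine tendsto_zero_of_first_order (z := -q) (fun t => ?_)
      (Or.inr (by simpa using hq)) t3 ?_
    · refine (((dg2 t).sub ((dg1 t).const_mul (p + q))).add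
        ((dg t).const_mul (p * q))).congr_deriv ?_
      ring
    · have := (h2.sub (h1.const_mul (p + q))).add (h0.const_mul (p * q))
      simp only [mul_zero, sub_zero, add_zero] at this
      refine this.congr fun t => ?_
      ring
  have t1 : Tendsto (fun t => deriv g t - q * g t) atBot (𝓝 0) := by
    refine tendsto_zero_of_first_order (z := p) (fun t => ?_) (Or.inl hp) t2 ?_
    · refine ((dg1 t).sub ((dg t).const_mul q)).congr_deriv ?_
      ring
    · have := h1.sub (h0.const_mul q)
      simp only [mul_zero, sub_zero] at this
      refine this.congr fun t => ?_
      ring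
  have t0 : Tendsto g atBot (𝓝 0) :=
    tendsto_zero_of_first_order (z := q) (fun t => (dg t).congr_deriv (by ring)) (Or.inl hq) t1 h0
  have s1 : Tendsto (deriv g) atBot (𝓝 0) := by
    simpa using t1.add (t0.const_mul q)
  have s2 : Tendsto (deriv (deriv g)) atBot (𝓝 0) := by
    have := (t2.add (s1.const_mul (p + q))).sub (t0.const_mul (p * q))
    simp only [mul_zero, add_zero, sub_zero] at this
    exact this.congr fun t => by ring
  refine ⟨t0, s1, s2, ?_⟩
  have := ((t3.add (s2.const_mul p)).add (s1.const_mul (q ^ 2))).sub (t0.const_mul (p * q ^ 2))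
  simp only [mul_zero, add_zero, sub_zero] at this
  exact this.congr fun t => by ring

lemma tendsto_bdryForm {a : ℝ} {g h : ℝ → ℂ} {l : Filter ℝ}
    (hg : Tendsto g l (𝓝 0) ∧ Tendsto (deriv g) l (𝓝 0) ∧
      Tendsto (deriv (deriv g)) l (𝓝 0) ∧ Tendsto (deriv (deriv (deriv g))) l (𝓝 0))
    (hh : Tendsto h l (𝓝 0) ∧ Tendsto (deriv h) l (𝓝 0) ∧
      Tendsto (deriv (deriv h)) l (𝓝 0) ∧ Tendsto (deriv (deriv (deriv h))) l (𝓝 0)) :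
    Tendsto (bdryForm a g h) l (𝓝 0) := by
  obtain ⟨g0, g1, g2, g3⟩ := hg
  obtain ⟨h0, h1, h2, h3⟩ := hh
  have := ((((g3.mul h0).sub (g2.mul h1)).add (g1.mul h2)).sub (g0.mul h3)).add
    (((g1.mul h0).sub (g0.mul h1)).const_mul (a : ℂ))
  simp only [mul_zero, add_zero, sub_zero] at this
  exact this

lemma eLpNorm_two_sq {α : Type*} [MeasurableSpace α] (μ : Measure α) (f : α → ℂ) :
    eLpNorm f 2 μ ^ 2 = ∫⁻ x, ‖f x‖ₑ ^ 2 ∂μ := by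
  have := eLpNorm_nnreal_pow_eq_lintegral (f := f) (μ := μ) (p := 2) (by norm_num)
  simpa using this

lemma lintegral_mul_sq_le {ρ A : ℝ → ℝ≥0∞} (hρ : Measurable ρ) (hA : Measurable A) :
    (∫⁻ x, ρ x * A x) ^ 2 ≤ (∫⁻ x, ρ x) * ∫⁻ x, ρ x * A x ^ 2 := by
  have h := ENNReal.lintegral_mul_le_Lp_mul_Lq (volume.withDensity ρ)
    Real.HolderConjugate.two_two (f := fun _ => 1) (g := A) (by fun_prop) hA.aemeasurable
  simp only [Pi.mul_apply, one_mul, ENNReal.one_rpow, lintegral_const] at h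
  rw [lintegral_withDensity_eq_lintegral_mul _ hρ hA,
    lintegral_withDensity_eq_lintegral_mul _ hρ (by fun_prop),
    withDensity_apply _ MeasurableSet.univ, setLIntegral_univ] at h
  simp only [Pi.mul_apply, ENNReal.rpow_ofNat] at h
  have h2 : ∀ x : ℝ≥0∞, (x ^ (1 / 2 : ℝ)) ^ 2 = x := fun x => by
    rw [← ENNReal.rpow_natCast, ← ENNReal.rpow_mul]; norm_num
  calc _ ≤ _ := pow_le_pow_left' h 2
    _ = _ := by rw [mul_pow, h2, h2]

/-- A quadratic form of Minkowski's integral inequality. -/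
lemma lintegral_enorm_integral_mul_sq_le {ρ : ℝ → ℂ} {A : ℝ → ℝ → ℂ} (hρ : Measurable ρ)
    (hA : Measurable (Function.uncurry A)) :
    ∫⁻ t, ‖∫ x, ρ x * A t x‖ₑ ^ 2
      ≤ (∫⁻ x, ‖ρ x‖ₑ) * ∫⁻ x, ‖ρ x‖ₑ * ∫⁻ t, ‖A t x‖ₑ ^ 2 := by
  have hm : Measurable (fun z : ℝ × ℝ => ‖ρ z.2‖ₑ * ‖A z.1 z.2‖ₑ ^ 2) :=
    ((hρ.comp measurable_snd).enorm).mul (hA.enorm.pow_const 2)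
  calc ∫⁻ t, ‖∫ x, ρ x * A t x‖ₑ ^ 2
      ≤ ∫⁻ t, (∫⁻ x, ‖ρ x‖ₑ) * ∫⁻ x, ‖ρ x‖ₑ * ‖A t x‖ₑ ^ 2 := by
        refine lintegral_mono fun t => ?_
        refine le_trans (pow_le_pow_left' (enorm_integral_le_lintegral_enorm _) 2) ?_
        simp only [enorm_mul]
        exact lintegral_mul_sq_le hρ.enorm (hA.comp measurable_prodMk_left).enorm
    _ = (∫⁻ x, ‖ρ x‖ₑ) * ∫⁻ t, ∫⁻ x, ‖ρ x‖ₑ * ‖A t x‖ₑ ^ 2 :=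
        lintegral_const_mul _ hm.lintegral_prod_right'
    _ = (∫⁻ x, ‖ρ x‖ₑ) * ∫⁻ x, ∫⁻ t, ‖ρ x‖ₑ * ‖A t x‖ₑ ^ 2 := by
        rw [lintegral_lintegral_swap hm.aemeasurable]
    _ = _ := by
        congr 1
        refine lintegral_congr fun x => ?_
        exact lintegral_const_mul _ ((hA.comp measurable_prodMk_right).enorm.pow_const 2)

/-- Convolution of complex functions on the line. -/
abbrev cv (f ρ : ℝ → ℂ) : ℝ → ℂ := f ⋆[ContinuousLinearMap.mul ℝ ℂ, volume] ρ

lemma cv_apply (f ρ : ℝ → ℂ) (t : ℝ) : cv f ρ t = ∫ s, f s * ρ (t - s) := rfl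

lemma cv_apply_swap (f ρ : ℝ → ℂ) (t : ℝ) : cv f ρ t = ∫ x, ρ x * f (t - x) := by
  unfold cv
  rw [convolution_eq_swap]
  simp [mul_comm]

lemma memLp_cv {f ρ : ℝ → ℂ} (hf : Measurable f) (hf2 : MemLp f 2) (hρ : Continuous ρ)
    (hρc : HasCompactSupport ρ) : MemLp (cv f ρ) 2 := by
  have hloc : LocallyIntegrable f := hf2.locallyIntegrable (by norm_num)
  refine ⟨(hρc.continuous_convolution_right _ hloc hρ).aestronglyMeasurable, ?_⟩
  have h1 : ∫⁻ x, ‖ρ x‖ₑ < ∞ := (hρ.integrable_of_hasCompactSupport hρc).hasFiniteIntegral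
  have h2 : ∫⁻ t, ‖f t‖ₑ ^ 2 < ∞ := by
    rw [← eLpNorm_two_sq]; exact ENNReal.pow_lt_top hf2.2
  have key : eLpNorm (cv f ρ) 2 volume ^ 2 < ∞ := by
    rw [eLpNorm_two_sq]
    simp only [cv_apply_swap]
    refine (lintegral_enorm_integral_mul_sq_le (A := fun t x => f (t - x)) hρ.measurable
      (hf.comp (measurable_fst.sub measurable_snd))).trans_lt ?_
    refine ENNReal.mul_lt_top h1 ?_
    have : ∀ x, ∫⁻ t, ‖f (t - x)‖ₑ ^ 2 = ∫⁻ t, ‖f t‖ₑ ^ 2 := fun x =>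
      lintegral_sub_right_eq_self (fun t => ‖f t‖ₑ ^ 2) x
    simp only [this]
    rw [lintegral_mul_const _ hρ.measurable.enorm]
    exact ENNReal.mul_lt_top h1 h2
  by_contra h
  rw [not_lt, top_le_iff] at h
  simp [h] at key

lemma tendsto_translate {f : ℝ → ℂ} (hf2 : MemLp f 2) (c : ℝ) :
    Tendsto (fun x : ℝ => ∫⁻ t, ‖Complex.exp (c * x) * f (t - x) - f t‖ₑ ^ 2) (𝓝 0) (𝓝 0) := by
  let F : Lp ℂ 2 (volume : Measure ℝ) := hf2.toLp f
  let S : ℝ → C(ℝ, ℝ) := fun x => ⟨fun t => t - x, by fun_prop⟩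
  have hS : Continuous S :=
    ContinuousMap.continuous_of_continuous_uncurry _
      (show Continuous fun z : ℝ × ℝ => z.2 - z.1 by fun_prop)
  have hmp : ∀ x, MeasurePreserving (S x) volume volume := fun x =>
    measurePreserving_sub_right volume x
  have hcont : Continuous fun x : ℝ => Complex.exp (c * x) • Lp.compMeasurePreserving (S x) (hmp x) F
      - F := by
    have hc1 : Continuous fun x : ℝ => Lp.compMeasurePreserving (S x) (hmp x) F :=
      continuous_const.compMeasurePreservingLp hS hmp (by norm_num)
    have hc2 : Continuous fun x : ℝ => Complex.exp (c * x) := by fun_prop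
    exact (hc2.smul hc1).sub continuous_const
  have h0 : Tendsto (fun x : ℝ => ‖Complex.exp (c * x) • Lp.compMeasurePreserving (S x) (hmp x) F
      - F‖ₑ ^ 2) (𝓝 0) (𝓝 0) := by
    have hS0 : Lp.compMeasurePreserving (S 0) (hmp 0) F = F := by
      refine Lp.ext ((Lp.coeFn_compMeasurePreserving F (hmp 0)).trans ?_)
      refine Eventually.of_forall fun t => ?_
      simp [S]
    have h := ((ENNReal.continuous_pow 2).comp hcont.enorm).tendsto 0
    have h00 : ‖Complex.exp (c * (0 : ℝ)) • Lp.compMeasurePreserving (S 0) (hmp 0) F - F‖ₑ ^ 2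
        = 0 := by
      rw [hS0]
      simp
    rw [← h00]
    exact h
  refine h0.congr fun x => ?_
  rw [Lp.enorm_def, eLpNorm_two_sq]
  refine lintegral_congr_ae ?_
  have e1 := hf2.coeFn_toLp
  have e2 : (Lp.compMeasurePreserving (S x) (hmp x) F : ℝ → ℂ) =ᵐ[volume] fun t => f (t - x) :=
    (Lp.coeFn_compMeasurePreserving F (hmp x)).trans
      ((hmp x).quasiMeasurePreserving.ae_eq_comp e1)
  filter_upwards [e1, e2, Lp.coeFn_sub (Complex.exp (c * x) •
    Lp.compMeasurePreserving (S x) (hmp x) F) F, Lp.coeFn_smul (Complex.exp (c * x))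
    (Lp.compMeasurePreserving (S x) (hmp x) F)] with t h1 h2 h3 h4
  rw [h3, Pi.sub_apply, h4, Pi.smul_apply, h2, h1, smul_eq_mul]

/-- A sequence of bump functions at the origin, with shrinking supports. -/
def bumpSeq (n : ℕ) : ContDiffBump (0 : ℝ) :=
  ⟨1 / (2 * (n + 1)), 1 / (n + 1), by positivity, by
    refine one_div_lt_one_div_of_lt (by positivity) ?_
    have : (0 : ℝ) < n + 1 := by positivity
    linarith⟩

/-- A smooth approximate identity. -/
def mollifier (n : ℕ) : ℝ → ℂ := fun x => ((bumpSeq n).normed volume x : ℂ)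

lemma contDiff_mollifier (n : ℕ) : ContDiff ℝ (⊤ : ℕ∞) (mollifier n) :=
  Complex.ofRealCLM.contDiff.comp (bumpSeq n).contDiff_normed

lemma hasCompactSupport_mollifier (n : ℕ) : HasCompactSupport (mollifier n) :=
  (bumpSeq n).hasCompactSupport_normed.comp_left (g := fun x : ℝ => (x : ℂ)) (by simp)

lemma lintegral_enorm_mollifier (n : ℕ) : ∫⁻ x, ‖mollifier n x‖ₑ = 1 := by
  have h : ∀ x, ‖mollifier n x‖ₑ = ENNReal.ofReal ((bumpSeq n).normed volume x) := fun x => by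
    rw [mollifier, ← ofReal_norm, Complex.norm_real, Real.norm_eq_abs,
      abs_of_nonneg ((bumpSeq n).nonneg_normed x)]
  simp only [h]
  rw [← ofReal_integral_eq_lintegral_ofReal (bumpSeq n).integrable_normed
    (Eventually.of_forall (bumpSeq n).nonneg_normed), (bumpSeq n).integral_normed]
  simp

lemma integral_mollifier (n : ℕ) : ∫ x, mollifier n x = 1 := by
  unfold mollifier
  rw [integral_complex_ofReal, (bumpSeq n).integral_normed]
  simp

lemma tendsto_cv_mollifier {f : ℝ → ℂ} (hf : Measurable f) (hf2 : MemLp f 2) (c : ℝ) :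
    Tendsto (fun n => eLpNorm (cv f (fun x => Complex.exp (c * x) * mollifier n x) - f) 2 volume)
      atTop (𝓝 0) := by
  have hloc : LocallyIntegrable f := hf2.locallyIntegrable (by norm_num)
  have hsq : Tendsto (fun n => eLpNorm (cv f (fun x => Complex.exp (c * x) * mollifier n x) - f) 2
      volume ^ 2) atTop (𝓝 0) := by
    have hrep : ∀ n t, (cv f (fun x => Complex.exp (c * x) * mollifier n x) - f) t
        = ∫ x, mollifier n x * (Complex.exp (c * x) * f (t - x) - f t) := by
      intro n t
      have hc : Continuous fun x : ℝ => Complex.exp (c * x) * mollifier n x :=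
        (by fun_prop : Continuous fun x : ℝ => Complex.exp (c * x)).mul
          (contDiff_mollifier n).continuous
      have hi : Integrable fun x => mollifier n x * (Complex.exp (c * x) * f (t - x)) := by
        have := ((hasCompactSupport_mollifier n).mul_left
          (f := fun x : ℝ => Complex.exp (c * x))).convolutionExists_right
          (ContinuousLinearMap.mul ℝ ℂ) hloc hc t
        refine this.integrable_swap.congr (Eventually.of_forall fun x => ?_)
        simp; ring
      have hi2 : Integrable fun x => mollifier n x * f t :=
        ((contDiff_mollifier n).continuous.integrable_of_hasCompactSupport
          (hasCompactSupport_mollifier n)).mul_const _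
      simp only [mul_sub]
      rw [integral_sub hi hi2, integral_mul_const, integral_mollifier, one_mul, Pi.sub_apply,
        cv_apply_swap]
      congr 1
      exact integral_congr_ae (Eventually.of_forall fun x => by simp; ring)
    rw [ENNReal.tendsto_nhds_zero]
    intro ε hε
    have hT := tendsto_translate hf2 c
    rw [ENNReal.tendsto_nhds_zero] at hT
    obtain ⟨δ, hδ, hδε⟩ := Metric.eventually_nhds_iff.1 (hT ε hε)
    have hr : Tendsto (fun n : ℕ => (1 : ℝ) / (n + 1)) atTop (𝓝 0) :=
      tendsto_one_div_add_atTop_nhds_zero_nat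
    filter_upwards [hr.eventually_lt_const hδ] with n hn
    rw [eLpNorm_two_sq]
    simp only [hrep]
    refine (lintegral_enorm_integral_mul_sq_le
      (A := fun t x => Complex.exp (c * x) * f (t - x) - f t)
      (contDiff_mollifier n).continuous.measurable ?_).trans ?_
    · have : Measurable fun z : ℝ × ℝ => Complex.exp (c * z.2) := by fun_prop
      exact (this.mul (hf.comp (measurable_fst.sub measurable_snd))).sub (hf.comp measurable_fst)
    · rw [lintegral_enorm_mollifier, one_mul]
      calc _ ≤ ∫⁻ x, ‖mollifier n x‖ₑ * ε := by
            refine lintegral_mono fun x => ?_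
            by_cases hx : dist x 0 < δ
            · exact mul_le_mul_right (hδε hx) _
            · have : mollifier n x = 0 := by
                have hs := (bumpSeq n).support_normed_eq (μ := volume)
                have : x ∉ Function.support ((bumpSeq n).normed volume) := by
                  rw [hs, Metric.mem_ball]
                  intro h
                  exact hx (h.trans hn)
                simpa [mollifier] using this
              simp [this]
        _ = ε := by
            rw [lintegral_mul_const _ (contDiff_mollifier n).continuous.measurable.enorm,
              lintegral_enorm_mollifier, one_mul]
  have := (ENNReal.continuous_rpow_const (y := (1 / 2 : ℝ))).tendsto 0 |>.comp hsq
  simp only [Function.comp_def] at this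
  rw [ENNReal.zero_rpow_of_pos (by norm_num)] at this
  refine this.congr fun n => ?_
  rw [← ENNReal.rpow_natCast, ← ENNReal.rpow_mul]; norm_num

lemma deriv_cv {g ρ : ℝ → ℂ} (hg : LocallyIntegrable g) (hρ : ContDiff ℝ (⊤ : ℕ∞) ρ)
    (hρc : HasCompactSupport ρ) : deriv (cv g ρ) = cv g (deriv ρ) := by
  ext t
  exact (hρc.hasDerivAt_convolution_right _ hg (hρ.of_le (by exact_mod_cast le_top)) t).deriv

lemma contDiff_cv {g ρ : ℝ → ℂ} (hg : LocallyIntegrable g) (hρ : ContDiff ℝ (⊤ : ℕ∞) ρ)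
    (hρc : HasCompactSupport ρ) : ContDiff ℝ (⊤ : ℕ∞) (cv g ρ) :=
  hρc.contDiff_convolution_right _ hg hρ

lemma integrable_cv {g ρ : ℝ → ℂ} (hg : LocallyIntegrable g) (hρ : Continuous ρ)
    (hρc : HasCompactSupport ρ) (t : ℝ) : Integrable fun s => g s * ρ (t - s) := by
  refine hg.integrable_smul_right_of_hasCompactSupport (g := fun s => ρ (t - s)) (by fun_prop) ?_
  exact hρc.comp_homeomorph (Homeomorph.subLeft t)

lemma polyD_cv (a b : ℝ) {g ρ : ℝ → ℂ} (hg : LocallyIntegrable g)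
    (hρ : ContDiff ℝ (⊤ : ℕ∞) ρ) (hρc : HasCompactSupport ρ) :
    polyD a b (cv g ρ) = cv g (polyD a b ρ) := by
  have h1 := contDiff_top_deriv hρ
  have h2 := contDiff_top_deriv h1
  have h3 := contDiff_top_deriv h2
  have h4 := contDiff_top_deriv h3
  have k2 := hρc.deriv.deriv
  have k4 := k2.deriv.deriv
  ext t
  unfold polyD
  rw [deriv_cv hg hρ hρc, deriv_cv hg h1 hρc.deriv, deriv_cv hg h2 k2, deriv_cv hg h3 k2.deriv]
  simp only [cv_apply]
  rw [← integral_const_mul, ← integral_const_mul,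
    ← integral_add (integrable_cv hg h4.continuous k4 t)
      ((integrable_cv hg h2.continuous k2 t).const_mul _),
    ← integral_add _ ((integrable_cv hg hρ.continuous hρc t).const_mul _)]
  · congr 1
    ext s
    ring
  · exact (integrable_cv hg h4.continuous k4 t).add
      ((integrable_cv hg h2.continuous k2 t).const_mul _)

lemma deriv_comp_const_sub' (x : ℝ) (ψ : ℝ → ℂ) :
    deriv (fun s => ψ (x - s)) = fun s => -deriv ψ (x - s) := by
  ext s
  rw [deriv_comp_const_sub]

lemma polyD_comp_const_sub (a b x : ℝ) (ψ : ℝ → ℂ) :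
    polyD a b (fun s => ψ (x - s)) = fun s => polyD a b ψ (x - s) := by
  have hneg : ∀ φ : ℝ → ℂ, deriv (fun s => -φ s) = fun s => -deriv φ s := fun φ => by
    ext s
    exact deriv.neg
  ext s
  simp only [polyD, deriv_comp_const_sub', hneg, neg_neg]

lemma cv_exp_mul (c : ℝ) (f ρ : ℝ → ℂ) (t : ℝ) :
    cv (fun s => Complex.exp (c * s) * f s) ρ t
      = Complex.exp (c * t) * cv f (fun x => Complex.exp ((-c : ℝ) * x) * ρ x) t := by
  simp only [cv_apply]
  rw [← integral_const_mul]
  congr 1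
  ext s
  have : Complex.exp (c * s) = Complex.exp (c * t) * Complex.exp ((-c : ℝ) * (t - s : ℝ)) := by
    rw [← Complex.exp_add]
    congr 1
    push_cast
    ring
  rw [this]
  ring

lemma tendsto_cv {f ρ : ℝ → ℂ} (hf : Measurable f) (hf2 : MemLp f 2)
    (hρ : ContDiff ℝ (⊤ : ℕ∞) ρ) (hρc : HasCompactSupport ρ) :
    Tendsto (cv f ρ) atTop (𝓝 0) ∧ Tendsto (cv f ρ) atBot (𝓝 0) := by
  have hloc : LocallyIntegrable f := hf2.locallyIntegrable (by norm_num)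
  have m0 := memLp_cv hf hf2 hρ.continuous hρc
  have m1 := memLp_cv hf hf2 (contDiff_top_deriv hρ).continuous hρc.deriv
  have hd : ∀ t, HasDerivAt (cv f ρ * cv f ρ)
      ((cv f (deriv ρ) * cv f ρ + cv f ρ * cv f (deriv ρ)) t) t := fun t => by
    have := contDiff_top_hasDerivAt (contDiff_cv hloc hρ hρc) t
    rw [deriv_cv hloc hρ hρc] at this
    exact this.mul this
  have i0 : Integrable (cv f ρ * cv f ρ) := m0.integrable_mul m0
  have i1 : Integrable (cv f (deriv ρ) * cv f ρ + cv f ρ * cv f (deriv ρ)) :=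
    (m1.integrable_mul m0).add (m0.integrable_mul m1)
  have hsq : ∀ l : Filter ℝ, Tendsto (cv f ρ * cv f ρ) l (𝓝 0) → Tendsto (cv f ρ) l (𝓝 0) := by
    intro l h
    have h' := h.norm.sqrt
    rw [tendsto_zero_iff_norm_tendsto_zero]
    simpa [Real.sqrt_mul_self] using h'
  exact ⟨hsq _ (tendsto_zero_of_hasDerivAt_of_integrableOn_Ioi (a := 0) (fun t _ => hd t)
      i1.integrableOn i0.integrableOn),
    hsq _ (tendsto_zero_of_hasDerivAt_of_integrableOn_Iic (a := 0) (fun t _ => hd t)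
      i1.integrableOn i0.integrableOn)⟩

/-- `e^{-2t} f` is a weak solution of `polyD a b (e^{-2t} f) = e^{2t} m`, with `f, m` in `L²`. -/
structure WeakSol (a b : ℝ) (f m : ℝ → ℂ) : Prop where
  measurable_left : Measurable f
  measurable_right : Measurable m
  memLp_left : MemLp f 2
  memLp_right : MemLp m 2
  weak : ∀ ψ : ℝ → ℂ, ContDiff ℝ (⊤ : ℕ∞) ψ → HasCompactSupport ψ →
    ∫ s : ℝ, Complex.exp ((-2 : ℝ) * s) * f s * polyD a b ψ s
      = ∫ s : ℝ, Complex.exp ((2 : ℝ) * s) * m s * ψ s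

lemma locallyIntegrable_exp_mul (c : ℝ) {f : ℝ → ℂ} (hf : MemLp f 2) :
    LocallyIntegrable fun s : ℝ => Complex.exp (c * s) * f s := by
  have h := hf.locallyIntegrable (by norm_num)
  rw [← locallyIntegrableOn_univ] at h ⊢
  exact h.continuousOn_mul (by fun_prop) isOpen_univ.isLocallyClosed

lemma contDiff_exp_mul (c : ℝ) {ρ : ℝ → ℂ} (hρ : ContDiff ℝ (⊤ : ℕ∞) ρ) :
    ContDiff ℝ (⊤ : ℕ∞) fun x : ℝ => Complex.exp (c * x) * ρ x := by
  have : ContDiff ℝ (⊤ : ℕ∞) fun x : ℝ => (x : ℂ) := Complex.ofRealCLM.contDiff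
  exact ((contDiff_const.mul this).cexp).mul hρ

namespace WeakSol

variable {a b : ℝ} {f m ρ : ℝ → ℂ}

/-- The mollification of the weak solution `e^{-2t} f`. -/
def reg (f ρ : ℝ → ℂ) : ℝ → ℂ := cv (fun s => Complex.exp ((-2 : ℝ) * s) * f s) ρ

lemma reg_eq (f ρ : ℝ → ℂ) (t : ℝ) : reg f ρ t = Complex.exp ((-2 : ℝ) * t) *
    cv f (fun x => Complex.exp ((2 : ℝ) * x) * ρ x) t := by
  rw [reg, cv_exp_mul, neg_neg]

lemma contDiff_reg (h : WeakSol a b f m) (hρ : ContDiff ℝ (⊤ : ℕ∞) ρ)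
    (hρc : HasCompactSupport ρ) : ContDiff ℝ (⊤ : ℕ∞) (reg f ρ) :=
  contDiff_cv (locallyIntegrable_exp_mul _ h.memLp_left) hρ hρc

lemma polyD_reg (h : WeakSol a b f m) (hρ : ContDiff ℝ (⊤ : ℕ∞) ρ)
    (hρc : HasCompactSupport ρ) (t : ℝ) : polyD a b (reg f ρ) t = Complex.exp ((2 : ℝ) * t) *
      cv m (fun x => Complex.exp ((-2 : ℝ) * x) * ρ x) t := by
  rw [reg, polyD_cv a b (locallyIntegrable_exp_mul _ h.memLp_left) hρ hρc, ← cv_exp_mul]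
  simp only [cv_apply]
  rw [← h.weak (fun s => ρ (t - s)) (hρ.comp (contDiff_const.sub contDiff_id))
    (hρc.comp_homeomorph (Homeomorph.subLeft t)), polyD_comp_const_sub]

lemma deriv_reg (h : WeakSol a b f m) (hρ : ContDiff ℝ (⊤ : ℕ∞) ρ)
    (hρc : HasCompactSupport ρ) : deriv (reg f ρ) = reg f (deriv ρ) :=
  deriv_cv (locallyIntegrable_exp_mul _ h.memLp_left) hρ hρc

lemma tendsto_reg (h : WeakSol a b f m) (hρ : ContDiff ℝ (⊤ : ℕ∞) ρ)
    (hρc : HasCompactSupport ρ) : Tendsto (reg f ρ) atTop (𝓝 0) ∧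
      Tendsto (fun t : ℝ => Complex.exp (2 * t) * reg f ρ t) atBot (𝓝 0) := by
  obtain ⟨h1, h2⟩ := tendsto_cv h.measurable_left h.memLp_left (contDiff_exp_mul 2 hρ) hρc.mul_left
  constructor
  · have he : Tendsto (fun t : ℝ => Complex.exp ((-2 : ℝ) * t)) atTop (𝓝 0) := by
      rw [tendsto_zero_iff_norm_tendsto_zero]
      simp only [← Complex.ofReal_mul, ← Complex.ofReal_exp, Complex.norm_real, Real.norm_eq_abs,
        Real.abs_exp]
      exact Real.tendsto_exp_atBot.comp (tendsto_id.const_mul_atTop_of_neg (by norm_num))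
    have := he.mul h1
    rw [zero_mul] at this
    exact this.congr fun t => (reg_eq f ρ t).symm
  · refine h2.congr fun t => ?_
    rw [reg_eq, ← mul_assoc, ← Complex.exp_add]
    simp

lemma tendsto_reg_atTop (h : WeakSol a b f m) (hρ : ContDiff ℝ (⊤ : ℕ∞) ρ)
    (hρc : HasCompactSupport ρ) :
    Tendsto (reg f ρ) atTop (𝓝 0) ∧ Tendsto (deriv (reg f ρ)) atTop (𝓝 0) ∧
      Tendsto (deriv (deriv (reg f ρ))) atTop (𝓝 0) ∧
      Tendsto (deriv (deriv (deriv (reg f ρ)))) atTop (𝓝 0) := by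
  have h1 := contDiff_top_deriv hρ
  have h2 := contDiff_top_deriv h1
  have h3 := contDiff_top_deriv h2
  have k2 := hρc.deriv.deriv
  rw [h.deriv_reg hρ hρc, h.deriv_reg h1 hρc.deriv, h.deriv_reg h2 k2]
  exact ⟨(h.tendsto_reg hρ hρc).1, (h.tendsto_reg h1 hρc.deriv).1, (h.tendsto_reg h2 k2).1,
    (h.tendsto_reg h3 k2.deriv).1⟩

lemma tendsto_reg_atBot (h : WeakSol a b f m) {p q : ℂ} (hp : 2 ≤ p.re) (hq : 2 ≤ q.re)
    (ha : (a : ℂ) = -(p ^ 2 + q ^ 2)) (hb : (b : ℂ) = p ^ 2 * q ^ 2)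
    (hρ : ContDiff ℝ (⊤ : ℕ∞) ρ) (hρc : HasCompactSupport ρ) :
    Tendsto (reg f ρ) atBot (𝓝 0) ∧ Tendsto (deriv (reg f ρ)) atBot (𝓝 0) ∧
      Tendsto (deriv (deriv (reg f ρ))) atBot (𝓝 0) ∧
      Tendsto (deriv (deriv (deriv (reg f ρ)))) atBot (𝓝 0) := by
  have h1 := contDiff_top_deriv hρ
  have h2 := contDiff_top_deriv h1
  have h3 := contDiff_top_deriv h2
  have k2 := hρc.deriv.deriv
  have e1 := h.deriv_reg hρ hρc
  have e2 := h.deriv_reg h1 hρc.deriv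
  have e3 := h.deriv_reg h2 k2
  refine tendsto_zero_of_polyD hp hq ha hb (h.contDiff_reg hρ hρc) (h.tendsto_reg hρ hρc).2 ?_ ?_ ?_ ?_
  · rw [e1]
    exact (h.tendsto_reg h1 hρc.deriv).2
  · rw [e1, e2]
    exact (h.tendsto_reg h2 k2).2
  · rw [e1, e2, e3]
    exact (h.tendsto_reg h3 k2.deriv).2
  · have he : Tendsto (fun t : ℝ => Complex.exp ((2 : ℝ) * t)) atBot (𝓝 0) := by
      rw [tendsto_zero_iff_norm_tendsto_zero]
      simp only [← Complex.ofReal_mul, ← Complex.ofReal_exp, Complex.norm_real, Real.norm_eq_abs,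
        Real.abs_exp]
      exact Real.tendsto_exp_atBot.comp (tendsto_id.const_mul_atBot (by norm_num))
    have := he.mul (tendsto_cv h.measurable_right h.memLp_right (contDiff_exp_mul (-2) hρ)
      hρc.mul_left).2
    rw [zero_mul] at this
    exact this.congr fun t => (h.polyD_reg hρ hρc t).symm

lemma integral_cv_eq {f' m' : ℝ → ℂ} (h : WeakSol a b f m) (h' : WeakSol a b f' m') {p q : ℂ}
    (hp : 2 ≤ p.re) (hq : 2 ≤ q.re)
    (ha : (a : ℂ) = -(p ^ 2 + q ^ 2)) (hb : (b : ℂ) = p ^ 2 * q ^ 2)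
    (hρ : ContDiff ℝ (⊤ : ℕ∞) ρ) (hρc : HasCompactSupport ρ) :
    ∫ t, cv m (fun x => Complex.exp ((-2 : ℝ) * x) * ρ x) t
        * cv f' (fun x => Complex.exp ((2 : ℝ) * x) * ρ x) t
      = ∫ t, cv f (fun x => Complex.exp ((2 : ℝ) * x) * ρ x) t
        * cv m' (fun x => Complex.exp ((-2 : ℝ) * x) * ρ x) t := by
  have e : ∀ t : ℝ, Complex.exp ((2 : ℝ) * t) * Complex.exp ((-2 : ℝ) * t) = 1 := fun t => by
    rw [← Complex.exp_add]
    simp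
  have hd : ∀ t, HasDerivAt (bdryForm a (reg f ρ) (reg f' ρ))
      (cv m (fun x => Complex.exp ((-2 : ℝ) * x) * ρ x) t
        * cv f' (fun x => Complex.exp ((2 : ℝ) * x) * ρ x) t
      - cv f (fun x => Complex.exp ((2 : ℝ) * x) * ρ x) t
        * cv m' (fun x => Complex.exp ((-2 : ℝ) * x) * ρ x) t) t := fun t => by
    refine (hasDerivAt_bdryForm a b (h.contDiff_reg hρ hρc) (h'.contDiff_reg hρ hρc) t).congr_deriv ?_
    rw [h.polyD_reg hρ hρc, h'.polyD_reg hρ hρc, reg_eq, reg_eq]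
    linear_combination (cv m (fun x => Complex.exp ((-2 : ℝ) * x) * ρ x) t
        * cv f' (fun x => Complex.exp ((2 : ℝ) * x) * ρ x) t
      - cv f (fun x => Complex.exp ((2 : ℝ) * x) * ρ x) t
        * cv m' (fun x => Complex.exp ((-2 : ℝ) * x) * ρ x) t) * e t
  have hα := (contDiff_exp_mul (-2) hρ).continuous
  have hβ := (contDiff_exp_mul 2 hρ).continuous
  have i1 := (memLp_cv h.measurable_right h.memLp_right hα hρc.mul_left).integrable_mul
    (memLp_cv h'.measurable_left h'.memLp_left hβ hρc.mul_left)
  have i2 := (memLp_cv h.measurable_left h.memLp_left hβ hρc.mul_left).integrable_mul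
    (memLp_cv h'.measurable_right h'.memLp_right hα hρc.mul_left)
  have := integral_of_hasDerivAt_of_tendsto hd (i1.sub i2)
    (tendsto_bdryForm (h.tendsto_reg_atBot hp hq ha hb hρ hρc)
      (h'.tendsto_reg_atBot hp hq ha hb hρ hρc))
    (tendsto_bdryForm (h.tendsto_reg_atTop hρ hρc) (h'.tendsto_reg_atTop hρ hρc))
  rw [sub_zero] at this
  exact sub_eq_zero.1 ((integral_sub i1 i2).symm.trans this)

end WeakSol

lemma tendsto_integral_mul {F G : ℕ → ℝ → ℂ} {f g : ℝ → ℂ} (hF : ∀ n, MemLp (F n) 2)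
    (hG : ∀ n, MemLp (G n) 2) (hf : MemLp f 2) (hg : MemLp g 2)
    (h1 : Tendsto (fun n => eLpNorm (F n - f) 2 volume) atTop (𝓝 0))
    (h2 : Tendsto (fun n => eLpNorm (G n - g) 2 volume) atTop (𝓝 0)) :
    Tendsto (fun n => ∫ t, F n t * G n t) atTop (𝓝 (∫ t, f t * g t)) := by
  have key : ∀ {u v : ℝ → ℂ} (hu : MemLp u 2) (hv : MemLp v 2),
      inner ℂ (hu.star.toLp (star u)) (hv.toLp v) = ∫ t, u t * v t := by
    intro u v hu hv
    rw [L2.inner_def]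
    refine integral_congr_ae ?_
    filter_upwards [hu.star.coeFn_toLp, hv.coeFn_toLp] with t e1 e2
    simp [e1, e2, mul_comm]
  rw [← Lp.tendsto_Lp_iff_tendsto_eLpNorm'' G hG g hg] at h2
  have h1' : Tendsto (fun n => eLpNorm (star (F n) - star f) 2 volume) atTop (𝓝 0) := by
    refine h1.congr fun n => eLpNorm_congr_norm_ae (Eventually.of_forall fun t => ?_)
    simp [← map_sub]
  rw [← Lp.tendsto_Lp_iff_tendsto_eLpNorm'' _ (fun n => (hF n).star) _ hf.star] at h1'
  have := h1'.inner (𝕜 := ℂ) h2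
  rw [key hf hg] at this
  exact this.congr fun n => key (hF n) (hG n)

theorem WeakSol.integral_mul_eq {a b : ℝ} {f m f' m' : ℝ → ℂ} (h : WeakSol a b f m)
    (h' : WeakSol a b f' m') {p q : ℂ} (hp : 2 ≤ p.re) (hq : 2 ≤ q.re)
    (ha : (a : ℂ) = -(p ^ 2 + q ^ 2)) (hb : (b : ℂ) = p ^ 2 * q ^ 2) :
    ∫ t, m t * f' t = ∫ t, f t * m' t := by
  have hα := fun n => (contDiff_exp_mul (-2) (contDiff_mollifier n)).continuous
  have hβ := fun n => (contDiff_exp_mul 2 (contDiff_mollifier n)).continuous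
  have hc : ∀ n (c : ℝ), HasCompactSupport fun x : ℝ => Complex.exp (c * x) * mollifier n x :=
    fun n c => (hasCompactSupport_mollifier n).mul_left
  have l1 := tendsto_integral_mul
    (fun n => memLp_cv h.measurable_right h.memLp_right (hα n) (hc n (-2)))
    (fun n => memLp_cv h'.measurable_left h'.memLp_left (hβ n) (hc n 2))
    h.memLp_right h'.memLp_left (tendsto_cv_mollifier h.measurable_right h.memLp_right (-2))
    (tendsto_cv_mollifier h'.measurable_left h'.memLp_left 2)
  have l2 := tendsto_integral_mul
    (fun n => memLp_cv h.measurable_left h.memLp_left (hβ n) (hc n 2))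
    (fun n => memLp_cv h'.measurable_right h'.memLp_right (hα n) (hc n (-2)))
    h.memLp_left h'.memLp_right (tendsto_cv_mollifier h.measurable_left h.memLp_left 2)
    (tendsto_cv_mollifier h'.measurable_right h'.memLp_right (-2))
  refine tendsto_nhds_unique l1 (l2.congr fun n => ?_)
  exact (h.integral_cv_eq h' hp hq ha hb (contDiff_mollifier n)
    (hasCompactSupport_mollifier n)).symm

section Abstract

variable {H : Type*} [NormedAddCommGroup H] [InnerProductSpace ℂ H]

lemma Submodule.mem_adjoint_span_iff {S : Set (H × H)} {x : H × H} :
    x ∈ (Submodule.span ℂ S).adjoint ↔ ∀ p ∈ S, inner ℂ p.2 x.1 = inner ℂ p.1 x.2 := by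
  rw [Submodule.mem_adjoint_iff]
  refine ⟨fun h p hp => sub_eq_zero.1 (h p.1 p.2 (Submodule.subset_span hp)), fun h a b hab => ?_⟩
  rw [sub_eq_zero]
  suffices ∀ p ∈ Submodule.span ℂ S, inner ℂ p.2 x.1 = inner ℂ p.1 x.2 from this _ hab
  intro p hp
  induction hp using Submodule.span_induction with
  | mem p hp => exact h p hp
  | zero => simp
  | add p q _ _ h1 h2 => simp [h1, h2]
  | smul c p _ h1 => simp [h1]

theorem essentiallySelfAdjoint_toLinearPMap_iff [CompleteSpace H] {g : Submodule ℂ (H × H)}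
    (hd : Dense (g.map (LinearMap.fst ℂ H H) : Set H)) (hs : g ≤ g.adjoint) :
    EssentiallySelfAdjoint g.toLinearPMap ↔
      ∀ x ∈ g.adjoint, ∀ y ∈ g.adjoint, inner ℂ y.2 x.1 = inner ℂ y.1 x.2 := by
  have hg : g.toLinearPMap.graph = g := by
    refine g.toLinearPMap_graph_eq fun x hx hx1 => ?_
    refine hd.eq_zero_of_inner_right ℂ fun v hv => ?_
    obtain ⟨p, hp, rfl⟩ := hv
    have := (Submodule.mem_adjoint_iff g x).1 (hs hx) p.1 p.2 hp
    simpa [hx1] using this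
  have hd1 : Dense (g.toLinearPMap.domain : Set H) := by rwa [Submodule.toLinearPMap_domain]
  have hg1 : g.toLinearPMap.adjoint.graph = g.adjoint := by
    rw [LinearPMap.adjoint_graph_eq_graph_adjoint hd1, hg]
  have hd2 : Dense (g.toLinearPMap.adjoint.domain : Set H) := by
    rw [← LinearPMap.graph_map_fst_eq_domain, hg1]
    exact hd.mono (Submodule.map_mono hs)
  have hg2 : g.toLinearPMap.adjoint.adjoint.graph = g.adjoint.adjoint := by
    rw [LinearPMap.adjoint_graph_eq_graph_adjoint hd2, hg1]
  have h1 : EssentiallySelfAdjoint g.toLinearPMap ↔ g.adjoint.adjoint = g.adjoint := by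
    rw [EssentiallySelfAdjoint, and_iff_right hd1, LinearPMap.isSelfAdjoint_def, ← hg2, ← hg1]
    exact ⟨congrArg _, LinearPMap.eq_of_eq_graph⟩
  have h2 : g.adjoint.adjoint ≤ g.adjoint := fun x hx => by
    rw [Submodule.mem_adjoint_iff] at hx ⊢
    exact fun a b hab => hx a b (hs hab)
  rw [h1]
  refine ⟨fun h x hx y hy => ?_, fun h => le_antisymm h2 fun x hx => ?_⟩
  · rw [← h] at hx
    exact sub_eq_zero.1 ((Submodule.mem_adjoint_iff _ x).1 hx y.1 y.2 hy)
  · rw [Submodule.mem_adjoint_iff]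
    exact fun a b hab => sub_eq_zero.2 (h x hx (a, b) hab)

end Abstract

/-- The characteristic polynomial splits as `(z² - p²)(z² - q²)` with `p`, `q` in `Re z ≥ 2`. -/
lemma exists_factorization {a b : ℝ} (h1 : -8 ≤ a → (a / 2 + 8) ^ 2 ≤ b)
    (h2 : a < -8 → 0 ≤ 16 + 4 * a + b) :
    ∃ p q : ℂ, 2 ≤ p.re ∧ 2 ≤ q.re ∧ (a : ℂ) = -(p ^ 2 + q ^ 2) ∧ (b : ℂ) = p ^ 2 * q ^ 2 := by
  rcases lt_or_ge (a ^ 2 - 4 * b) 0 with hD | hD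
  · have hb : 0 < b := by nlinarith [sq_nonneg a]
    set s := √b with hs
    have hs2 : s ^ 2 = b := Real.sq_sqrt hb.le
    have hs0 : 0 < s := Real.sqrt_pos.2 hb
    have ha : |a| < 2 * s := abs_lt_of_sq_lt_sq (by nlinarith) (by positivity)
    obtain ⟨ha1, ha2⟩ := abs_lt.1 ha
    have hx2 : (√((2 * s - a) / 4)) ^ 2 = (2 * s - a) / 4 := Real.sq_sqrt (by linarith)
    have hy2 : (√((2 * s + a) / 4)) ^ 2 = (2 * s + a) / 4 := Real.sq_sqrt (by linarith)
    have hx : 2 ≤ √((2 * s - a) / 4) := by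
      refine Real.le_sqrt_of_sq_le ?_
      rcases le_or_gt (-8) a with h | h
      · have := abs_le_of_sq_le_sq' ((h1 h).trans_eq hs2.symm) hs0.le
        linarith [this.2]
      · linarith
    generalize √((2 * s - a) / 4) = x at hx hx2
    generalize √((2 * s + a) / 4) = y at hy2
    have e1 : a = -2 * (x ^ 2 - y ^ 2) := by rw [hx2, hy2]; ring
    have e2 : b = (x ^ 2 + y ^ 2) ^ 2 := by rw [hx2, hy2, ← hs2]; ring
    refine ⟨⟨x, y⟩, ⟨x, -y⟩, hx, hx, ?_, ?_⟩
    · rw [e1]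
      apply Complex.ext <;> simp [pow_two] <;> ring
    · rw [e2]
      apply Complex.ext <;> simp [pow_two] <;> ring
  · set s := √(a ^ 2 - 4 * b) with hs
    have hs2 : s ^ 2 = a ^ 2 - 4 * b := Real.sq_sqrt hD
    have hs0 : 0 ≤ s := Real.sqrt_nonneg _
    have hw : 4 ≤ (-a - s) / 2 := by
      rcases le_or_gt (-8) a with h | h
      · have := h1 h
        nlinarith [sq_nonneg s]
      · have := h2 h
        have : s ≤ -a - 8 := abs_le_of_sq_le_sq' (by nlinarith) (by linarith) |>.2
        linarith
    have hp2 : (√((-a - s) / 2)) ^ 2 = (-a - s) / 2 := Real.sq_sqrt (by linarith)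
    have hq2 : (√((-a + s) / 2)) ^ 2 = (-a + s) / 2 := Real.sq_sqrt (by linarith)
    have hp : 2 ≤ √((-a - s) / 2) := Real.le_sqrt_of_sq_le (by linarith)
    have hq : 2 ≤ √((-a + s) / 2) := Real.le_sqrt_of_sq_le (by linarith)
    refine ⟨√((-a - s) / 2), √((-a + s) / 2), by simpa using hp, by simpa using hq, ?_, ?_⟩
    · rw [← Complex.ofReal_pow, ← Complex.ofReal_pow, hp2, hq2]
      push_cast
      ring
    · rw [← Complex.ofReal_pow, ← Complex.ofReal_pow, hp2, hq2, ← Complex.ofReal_mul]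
      congr 1
      linear_combination (1 / 4) * hs2

/-- Otherwise the characteristic polynomial has a root in the open strip `|Re z| < 2`. -/
lemma exists_root {a b : ℝ} (h : ¬ ((-8 ≤ a → (a / 2 + 8) ^ 2 ≤ b) ∧
    (a < -8 → 0 ≤ 16 + 4 * a + b))) :
    ∃ z : ℂ, |z.re| < 2 ∧ z ^ 4 + a * z ^ 2 + b = 0 := by
  rcases lt_or_ge (a ^ 2 - 4 * b) 0 with hD | hD
  · have hb : 0 < b := by nlinarith [sq_nonneg a]
    set s := √b with hs
    have hs2 : s ^ 2 = b := Real.sq_sqrt hb.le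
    have hs0 : 0 < s := Real.sqrt_pos.2 hb
    have ha : |a| < 2 * s := abs_lt_of_sq_lt_sq (by nlinarith) (by positivity)
    obtain ⟨ha1, ha2⟩ := abs_lt.1 ha
    have hx2 : (√((2 * s - a) / 4)) ^ 2 = (2 * s - a) / 4 := Real.sq_sqrt (by linarith)
    have hy2 : (√((2 * s + a) / 4)) ^ 2 = (2 * s + a) / 4 := Real.sq_sqrt (by linarith)
    have hx0 : 0 ≤ √((2 * s - a) / 4) := Real.sqrt_nonneg _
    have hx : √((2 * s - a) / 4) < 2 := by
      rw [Real.sqrt_lt' (by norm_num)]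
      by_contra hc
      refine h ⟨fun h8 => ?_, fun h8 => ?_⟩ <;> nlinarith
    generalize √((2 * s - a) / 4) = x at hx hx2 hx0
    generalize √((2 * s + a) / 4) = y at hy2
    have e1 : a = -2 * (x ^ 2 - y ^ 2) := by rw [hx2, hy2]; ring
    have e2 : b = (x ^ 2 + y ^ 2) ^ 2 := by rw [hx2, hy2, ← hs2]; ring
    refine ⟨⟨x, y⟩, by rwa [abs_of_nonneg hx0], ?_⟩
    have : (⟨x, y⟩ : ℂ) = x + y * Complex.I := by apply Complex.ext <;> simp
    rw [this, e1, e2]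
    push_cast
    linear_combination (4 * (x : ℂ) ^ 2 * y ^ 2 + 4 * (x : ℂ) * y ^ 3 * Complex.I
      + (y : ℂ) ^ 4 * (Complex.I ^ 2 + 1)) * Complex.I_sq
  · set s := √(a ^ 2 - 4 * b) with hs
    have hs2 : s ^ 2 = a ^ 2 - 4 * b := Real.sq_sqrt hD
    have hs0 : 0 ≤ s := Real.sqrt_nonneg _
    have hw : (-a - s) / 2 < 4 := by
      by_contra hc
      refine h ⟨fun h8 => ?_, fun h8 => ?_⟩ <;> nlinarith
    have hs2' : (s : ℂ) ^ 2 = a ^ 2 - 4 * b := by exact_mod_cast hs2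
    rcases le_or_gt ((-a - s) / 2) 0 with h0 | h0
    · refine ⟨√(-((-a - s) / 2)) * Complex.I, by simp, ?_⟩
      have hz : ((√(-((-a - s) / 2)) : ℝ) : ℂ) ^ 2 = -((-a - s) / 2) := by
        rw [← Complex.ofReal_pow, Real.sq_sqrt (by linarith)]
        push_cast
        ring
      have hz2 : ((√(-((-a - s) / 2)) : ℝ) * Complex.I : ℂ) ^ 2 = (-a - s) / 2 := by
        rw [mul_pow, hz, Complex.I_sq]
        ring
      rw [show ((√(-((-a - s) / 2)) : ℝ) * Complex.I : ℂ) ^ 4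
        = (((√(-((-a - s) / 2)) : ℝ) * Complex.I : ℂ) ^ 2) ^ 2 by ring, hz2]
      linear_combination (1 / 4) * hs2'
    · refine ⟨√((-a - s) / 2), ?_, ?_⟩
      · rw [Complex.ofReal_re, abs_of_nonneg (Real.sqrt_nonneg _), Real.sqrt_lt' (by norm_num)]
        linarith
      have hz2 : ((√((-a - s) / 2) : ℝ) : ℂ) ^ 2 = (-a - s) / 2 := by
        rw [← Complex.ofReal_pow, Real.sq_sqrt h0.le]
        push_cast
        ring
      rw [show ((√((-a - s) / 2) : ℝ) : ℂ) ^ 4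
        = (((√((-a - s) / 2) : ℝ) : ℂ) ^ 2) ^ 2 by ring, hz2]
      linear_combination (1 / 4) * hs2'

/-- The function `r ↦ r^s ψ(log r)` on the half-line. -/
def toR (s : ℝ) (ψ : ℝ → ℂ) : ℝ → ℂ := fun r =>
  Complex.exp (s * (Real.log r : ℝ)) * ψ (Real.log r)

/-- The derivative `s ψ + ψ'` of `r^s ψ(log r)`, up to a power of `r`. -/
def shiftD (s : ℝ) (ψ : ℝ → ℂ) : ℝ → ℂ := fun t => s * ψ t + deriv ψ t

lemma contDiff_shiftD (s : ℝ) {ψ : ℝ → ℂ} (hψ : ContDiff ℝ (⊤ : ℕ∞) ψ) :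
    ContDiff ℝ (⊤ : ℕ∞) (shiftD s ψ) :=
  (contDiff_const.mul hψ).add (contDiff_top_deriv hψ)

lemma deriv_shiftD (s : ℝ) {ψ : ℝ → ℂ} (hψ : ContDiff ℝ (⊤ : ℕ∞) ψ) :
    deriv (shiftD s ψ) = shiftD s (deriv ψ) := by
  ext t
  exact (((contDiff_top_hasDerivAt hψ t).const_mul (s : ℂ)).add
    (contDiff_top_hasDerivAt (contDiff_top_deriv hψ) t)).deriv

lemma cexp_log {r : ℝ} (hr : 0 < r) : Complex.exp (Real.log r : ℝ) = r := by
  rw [← Complex.ofReal_exp, Real.exp_log hr]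

lemma inv_pow_mul_toR (n : ℕ) {s s' : ℝ} (hs : s' = s - n) (ψ : ℝ → ℂ) {r : ℝ} (hr : 0 < r) :
    ((r : ℂ) ^ n)⁻¹ * toR s ψ r = toR s' ψ r := by
  have h : Complex.exp (s' * (Real.log r : ℝ)) = ((r : ℂ) ^ n)⁻¹ *
      Complex.exp (s * (Real.log r : ℝ)) := by
    rw [← cexp_log hr, ← Complex.exp_nat_mul, ← Complex.exp_neg, ← Complex.exp_add, hs]
    congr 1
    push_cast
    ring
  rw [toR, toR, h, mul_assoc]

lemma deriv_toR {s s' : ℝ} (hs : s' = s - 1) {φ ψ : ℝ → ℂ} (hψ : ContDiff ℝ (⊤ : ℕ∞) ψ)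
    (hφ : Set.EqOn φ (toR s ψ) (Set.Ioi 0)) :
    Set.EqOn (deriv φ) (toR s' (shiftD s ψ)) (Set.Ioi 0) := by
  intro r hr
  rw [hφ.deriv isOpen_Ioi hr]
  have hl := Real.hasDerivAt_log (ne_of_gt hr)
  have h1 : HasDerivAt (fun r : ℝ => Complex.exp (s * (Real.log r : ℝ)))
      ((r⁻¹ : ℝ) • (s * Complex.exp (s * (Real.log r : ℝ)))) r :=
    (hasDerivAt_cexp_mul s (Real.log r)).scomp r hl
  have h2 : HasDerivAt (fun r : ℝ => ψ (Real.log r)) ((r⁻¹ : ℝ) • deriv ψ (Real.log r)) r :=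
    (contDiff_top_hasDerivAt hψ (Real.log r)).scomp r hl
  rw [← inv_pow_mul_toR 1 (s := s) (by simpa using hs) _ hr]
  refine (h1.mul h2).deriv.trans ?_
  simp only [toR, shiftD, Complex.real_smul, pow_one, Complex.ofReal_inv]
  ring

/-- In the variable `t = log r`, `τ₂` has constant coefficients up to a power of `r`. -/
lemma tau2exp_toR (c₁ c₂ : ℝ) {φ ψ : ℝ → ℂ} (hψ : ContDiff ℝ (⊤ : ℕ∞) ψ)
    (hφ : Set.EqOn φ (toR (3 / 2) ψ) (Set.Ioi 0)) :
    Set.EqOn (tau2exp c₁ c₂ φ)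
      (toR (-5 / 2) (polyD (2 * c₁ - 5 / 2) (9 / 16 + 3 * c₁ / 2 + c₂) ψ)) (Set.Ioi 0) := by
  have p1 := contDiff_top_deriv hψ
  have p2 := contDiff_top_deriv p1
  have p3 := contDiff_top_deriv p2
  have q1 := contDiff_shiftD (3 / 2) hψ
  have q2 := contDiff_shiftD (1 / 2) q1
  have q3 := contDiff_shiftD (-1 / 2) q2
  have d1 := deriv_toR (s' := 1 / 2) (by norm_num) hψ hφ
  have d2 := deriv_toR (s' := -1 / 2) (by norm_num) q1 d1
  have d3 := deriv_toR (s' := -3 / 2) (by norm_num) q2 d2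
  have d4 := deriv_toR (s' := -5 / 2) (by norm_num) q3 d3
  have hφ' : Set.EqOn (fun s : ℝ => ((s : ℂ) ^ 2)⁻¹ * φ s) (toR (-1 / 2) ψ) (Set.Ioi 0) :=
    fun r hr => by
      simp only
      rw [hφ hr]
      exact inv_pow_mul_toR 2 (by norm_num) ψ hr
  have e1 := deriv_toR (s' := -3 / 2) (by norm_num) hψ hφ'
  have e2 := deriv_toR (s' := -5 / 2) (by norm_num) (contDiff_shiftD (-1 / 2) hψ) e1
  intro r hr
  rw [tau2exp, d4 hr, d2 hr, e2 hr, mul_assoc (c₂ : ℂ), hφ hr,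
    inv_pow_mul_toR 2 (s' := -5 / 2) (by norm_num) _ hr,
    inv_pow_mul_toR 4 (s' := -5 / 2) (by norm_num) _ hr]
  simp only [toR]
  generalize Real.log r = t
  have s1 : ∀ s, deriv (shiftD s ψ) = shiftD s (deriv ψ) := fun s => deriv_shiftD s hψ
  have s2 : ∀ s, deriv (shiftD s (deriv ψ)) = shiftD s (deriv (deriv ψ)) := fun s => deriv_shiftD s p1
  have s3 : ∀ s, deriv (shiftD s (deriv (deriv ψ))) = shiftD s (deriv (deriv (deriv ψ))) :=
    fun s => deriv_shiftD s p2
  have hlin : ∀ (s s' : ℝ) {χ : ℝ → ℂ}, ContDiff ℝ (⊤ : ℕ∞) χ →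
      shiftD s (shiftD s' χ) = fun t => s * s' * χ t + (s + s') * deriv χ t + deriv (deriv χ) t := by
    intro s s' χ hχ
    ext t
    rw [shiftD, deriv_shiftD _ hχ]
    simp only [shiftD]
    ring
  rw [hlin _ _ q2, hlin _ _ hψ, hlin _ _ hψ]
  have hdd : ∀ {χ : ℝ → ℂ}, ContDiff ℝ (⊤ : ℕ∞) χ → deriv (fun t => ((1 / 2 : ℝ) : ℂ) *
      ((3 / 2 : ℝ) : ℂ) * χ t + (((1 / 2 : ℝ) : ℂ) + ((3 / 2 : ℝ) : ℂ)) * deriv χ t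
        + deriv (deriv χ) t) = fun t => ((1 / 2 : ℝ) : ℂ) * ((3 / 2 : ℝ) : ℂ) * deriv χ t
        + (((1 / 2 : ℝ) : ℂ) + ((3 / 2 : ℝ) : ℂ)) * deriv (deriv χ) t
        + deriv (deriv (deriv χ)) t := by
    intro χ hχ
    have k1 := contDiff_top_deriv hχ
    ext t
    exact ((((contDiff_top_hasDerivAt hχ t).const_mul _).add
      ((contDiff_top_hasDerivAt k1 t).const_mul _)).add
      (contDiff_top_hasDerivAt (contDiff_top_deriv k1) t)).deriv
  rw [hdd hψ, hdd p1]
  simp only [polyD]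
  push_cast
  ring

/-- Extension by zero of `r^s ψ(log r)` to the line. -/
def extR (s : ℝ) (ψ : ℝ → ℂ) : ℝ → ℂ := (Set.Ioi 0).indicator (toR s ψ)

lemma extR_eqOn (s : ℝ) (ψ : ℝ → ℂ) : Set.EqOn (extR s ψ) (toR s ψ) (Set.Ioi 0) :=
  fun _ hr => Set.indicator_of_mem hr _

lemma support_extR (s : ℝ) (ψ : ℝ → ℂ) : Function.support (extR s ψ) ⊆ Real.exp '' tsupport ψ := by
  intro r hr
  have h0 : r ∈ Set.Ioi (0 : ℝ) := by
    by_contra h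
    exact hr (Set.indicator_of_notMem h _)
  rw [Function.mem_support, extR_eqOn s ψ h0] at hr
  exact ⟨Real.log r, subset_tsupport _ (right_ne_zero_of_mul hr), Real.exp_log h0⟩

lemma isCompact_exp_image {ψ : ℝ → ℂ} (hψ : HasCompactSupport ψ) :
    IsCompact (Real.exp '' tsupport ψ) := hψ.isCompact.image Real.continuous_exp

lemma hasCompactSupport_extR (s : ℝ) {ψ : ℝ → ℂ} (hψ : HasCompactSupport ψ) :
    HasCompactSupport (extR s ψ) :=
  HasCompactSupport.of_support_subset_isCompact (isCompact_exp_image hψ) (support_extR s ψ)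

lemma tsupport_extR (s : ℝ) {ψ : ℝ → ℂ} (hψ : HasCompactSupport ψ) :
    tsupport (extR s ψ) ⊆ Set.Ioi 0 := by
  refine (closure_minimal (support_extR s ψ) (isCompact_exp_image hψ).isClosed).trans ?_
  rintro _ ⟨t, -, rfl⟩
  exact Real.exp_pos t

lemma contDiff_extR (s : ℝ) {ψ : ℝ → ℂ} (hψ : ContDiff ℝ (⊤ : ℕ∞) ψ) (hψc : HasCompactSupport ψ) :
    ContDiff ℝ (⊤ : ℕ∞) (extR s ψ) := by
  rw [contDiff_iff_contDiffAt]
  intro r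
  by_cases hr : r ∈ Set.Ioi (0 : ℝ)
  · have hl : ContDiffAt ℝ (⊤ : ℕ∞) Real.log r := Real.contDiffAt_log.2 (ne_of_gt hr)
    have hc : ContDiffAt ℝ (⊤ : ℕ∞) (fun r => (Real.log r : ℂ)) r :=
      Complex.ofRealCLM.contDiff.contDiffAt.comp r hl
    have h1 : ContDiffAt ℝ (⊤ : ℕ∞) (toR s ψ) r :=
      ((contDiffAt_const.mul hc).cexp).mul (hψ.contDiffAt.comp r hl)
    refine h1.congr_of_eventuallyEq ?_
    filter_upwards [isOpen_Ioi.mem_nhds hr] with y hy using extR_eqOn s ψ hy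
  · have hK : r ∈ (tsupport (extR s ψ))ᶜ := fun h => hr (tsupport_extR s hψc h)
    refine (contDiffAt_const (c := (0 : ℂ))).congr_of_eventuallyEq ?_
    filter_upwards [(isClosed_tsupport _).isOpen_compl.mem_nhds hK] with y hy
    exact image_eq_zero_of_notMem_tsupport hy

/-- Every test function on the half-line is `r^s ψ(log r)` for a test function `ψ`. -/
lemma exists_eqOn_toR (s : ℝ) {φ : ℝ → ℂ} (hφ : ContDiff ℝ (⊤ : ℕ∞) φ) (hφc : HasCompactSupport φ)
    (hφs : tsupport φ ⊆ Set.Ioi 0) : ∃ ψ : ℝ → ℂ, ContDiff ℝ (⊤ : ℕ∞) ψ ∧ HasCompactSupport ψ ∧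
      Set.EqOn φ (toR s ψ) (Set.Ioi 0) := by
  refine ⟨fun t => Complex.exp ((-s : ℝ) * t) * φ (Real.exp t),
    contDiff_exp_mul (-s) (hφ.comp Real.contDiff_exp), ?_, fun r hr => ?_⟩
  · have hK : IsCompact (Real.log '' tsupport φ) :=
      hφc.isCompact.image_of_continuousOn
        (Real.continuousOn_log.mono fun x hx => ne_of_gt (hφs hx))
    refine HasCompactSupport.of_support_subset_isCompact hK fun t ht => ?_
    exact ⟨Real.exp t, subset_tsupport _ (right_ne_zero_of_mul ht), Real.log_exp t⟩
  · simp only [toR]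
    rw [Real.exp_log hr, ← mul_assoc, ← Complex.exp_add]
    simp

lemma lintegral_lebIoi (F : ℝ → ℝ≥0∞) :
    ∫⁻ r, F r ∂lebIoi = ∫⁻ t, ENNReal.ofReal (Real.exp t) * F (Real.exp t) := by
  have h := lintegral_image_eq_lintegral_abs_deriv_mul (s := Set.univ) MeasurableSet.univ
    (fun x _ => (Real.hasDerivAt_exp x).hasDerivWithinAt) Real.exp_injective.injOn F
  rw [Set.image_univ, Real.range_exp, setLIntegral_univ] at h
  simpa only [lebIoi, Real.abs_exp] using h

lemma integral_lebIoi (F : ℝ → ℂ) :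
    ∫ r, F r ∂lebIoi = ∫ t, Real.exp t • F (Real.exp t) := by
  have h := integral_image_eq_integral_abs_deriv_smul (s := Set.univ) MeasurableSet.univ
    (fun x _ => (Real.hasDerivAt_exp x).hasDerivWithinAt) Real.exp_injective.injOn F
  rw [Set.image_univ, Real.range_exp, setIntegral_univ] at h
  simpa only [lebIoi, Real.abs_exp] using h

lemma ae_exp_of_ae_lebIoi {p : ℝ → Prop} (h : ∀ᵐ r ∂lebIoi, p r) : ∀ᵐ t : ℝ, p (Real.exp t) := by
  rw [lebIoi, ae_restrict_iff' measurableSet_Ioi, ae_iff] at h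
  have h2 := addHaar_image_eq_zero_of_differentiableOn_of_addHaar_eq_zero volume
    (f := Real.log) (fun x hx => (Real.differentiableAt_log (ne_of_gt ?_)).differentiableWithinAt) h
  · rw [ae_iff]
    refine measure_mono_null (fun t ht => ?_) h2
    exact ⟨Real.exp t, fun hc => ht (hc (Real.exp_pos t)), Real.log_exp t⟩
  · simp only [Classical.not_imp, Set.mem_ofPred_eq] at hx
    exact hx.1

/-- The unitary change of variables `u ↦ e^{t/2} u(e^t)`. -/
def lift (u : ℝ → ℂ) : ℝ → ℂ := fun t => Complex.exp ((1 / 2 : ℝ) * t) * u (Real.exp t)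

lemma lift_toR (s : ℝ) (ψ : ℝ → ℂ) (t : ℝ) :
    lift (toR s ψ) t = Complex.exp ((s + 1 / 2 : ℝ) * t) * ψ t := by
  simp only [lift, toR, Real.log_exp]
  rw [← mul_assoc, ← Complex.exp_add]
  congr 2
  push_cast
  ring

lemma lift_congr_ae {u v : ℝ → ℂ} (h : u =ᵐ[lebIoi] v) : lift u =ᵐ[volume] lift v := by
  filter_upwards [ae_exp_of_ae_lebIoi h] with t ht
  rw [lift, lift, ht]

lemma measurable_lift {u : ℝ → ℂ} (hu : Measurable u) : Measurable (lift u) := by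
  unfold lift
  exact Measurable.mul (by fun_prop) (hu.comp Real.measurable_exp)

lemma lintegral_lift_sq (u : ℝ → ℂ) : ∫⁻ t, ‖lift u t‖ₑ ^ 2 = ∫⁻ r, ‖u r‖ₑ ^ 2 ∂lebIoi := by
  rw [lintegral_lebIoi]
  refine lintegral_congr fun t => ?_
  rw [lift, enorm_mul, mul_pow]
  congr 1
  rw [← enorm_pow, ← Complex.exp_nat_mul, ← ofReal_norm, Complex.norm_exp]
  simp

lemma memLp_two_iff {μ : Measure ℝ} {u : ℝ → ℂ} (hu : Measurable u) :
    MemLp u 2 μ ↔ ∫⁻ r, ‖u r‖ₑ ^ 2 ∂μ < ∞ := by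
  rw [MemLp, and_iff_right hu.aestronglyMeasurable, ← eLpNorm_two_sq,
    ENNReal.pow_lt_top_iff]
  simp

lemma memLp_lift_iff {u : ℝ → ℂ} (hu : Measurable u) :
    MemLp (lift u) 2 ↔ MemLp u 2 lebIoi := by
  rw [memLp_two_iff hu, memLp_two_iff (measurable_lift hu), lintegral_lift_sq]

lemma inner_eq_integral_lift (u v : Lp ℂ 2 lebIoi) :
    inner ℂ u v = ∫ t, lift v t * conj (lift u t) := by
  rw [L2.inner_def, integral_lebIoi]
  congr 1
  ext t
  simp only [lift, map_mul, RCLike.inner_apply, ← Complex.exp_conj, Complex.real_smul, Complex.conj_ofReal]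
  have : ((Real.exp t : ℝ) : ℂ) = Complex.exp ((1 / 2 : ℝ) * t) * Complex.exp ((1 / 2 : ℝ) * t) := by
    rw [← Complex.exp_add, Complex.ofReal_exp]
    congr 1
    push_cast
    ring
  rw [this]
  ring

/-- The graph of `τ₂` on test functions, written in the variable `t = log r`. -/
def testGraph (a b : ℝ) : Set (Lp ℂ 2 lebIoi × Lp ℂ 2 lebIoi) :=
  {p | ∃ ψ : ℝ → ℂ, ContDiff ℝ (⊤ : ℕ∞) ψ ∧ HasCompactSupport ψ ∧
    (p.1 : ℝ → ℂ) =ᵐ[lebIoi] toR (3 / 2) ψ ∧ (p.2 : ℝ → ℂ) =ᵐ[lebIoi] toR (-5 / 2) (polyD a b ψ)}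

lemma Set.EqOn.ae_lebIoi {f g : ℝ → ℂ} (h : Set.EqOn f g (Set.Ioi 0)) : f =ᵐ[lebIoi] g := by
  filter_upwards [ae_restrict_mem measurableSet_Ioi] with r hr using h hr

lemma graphOnHalfLine_tau2exp (c₁ c₂ : ℝ) : graphOnHalfLine (tau2exp c₁ c₂) =
    Submodule.span ℂ (testGraph (2 * c₁ - 5 / 2) (9 / 16 + 3 * c₁ / 2 + c₂)) := by
  unfold graphOnHalfLine testGraph
  congr 1
  ext p
  constructor
  · rintro ⟨φ, hφ, hφc, hφs, h1, h2⟩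
    obtain ⟨ψ, hψ, hψc, he⟩ := exists_eqOn_toR (3 / 2) hφ hφc hφs
    exact ⟨ψ, hψ, hψc, h1.trans he.ae_lebIoi, h2.trans (tau2exp_toR c₁ c₂ hψ he).ae_lebIoi⟩
  · rintro ⟨ψ, hψ, hψc, h1, h2⟩
    have he := extR_eqOn (3 / 2) ψ
    exact ⟨extR (3 / 2) ψ, contDiff_extR _ hψ hψc, hasCompactSupport_extR _ hψc,
      tsupport_extR _ hψc, h1.trans he.ae_lebIoi.symm,
      h2.trans (tau2exp_toR c₁ c₂ hψ he).ae_lebIoi.symm⟩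

lemma contDiff_polyD (a b : ℝ) {ψ : ℝ → ℂ} (hψ : ContDiff ℝ (⊤ : ℕ∞) ψ) :
    ContDiff ℝ (⊤ : ℕ∞) (polyD a b ψ) := by
  have h2 := contDiff_top_deriv (contDiff_top_deriv hψ)
  exact ((contDiff_top_deriv (contDiff_top_deriv h2)).add (contDiff_const.mul h2)).add
    (contDiff_const.mul hψ)

lemma deriv_eq_zero_of_notMem_tsupport {ψ : ℝ → ℂ} {t : ℝ} (ht : t ∉ tsupport ψ) :
    ψ t = 0 ∧ deriv ψ t = 0 ∧ deriv (deriv ψ) t = 0 ∧ deriv (deriv (deriv ψ)) t = 0 ∧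
      deriv (deriv (deriv (deriv ψ))) t = 0 := by
  have hs : ∀ φ : ℝ → ℂ, t ∉ tsupport φ → t ∉ tsupport (deriv φ) := fun φ h h' =>
    h (closure_minimal support_deriv_subset (isClosed_tsupport φ) h')
  have h1 := hs _ ht
  have h2 := hs _ h1
  have h3 := hs _ h2
  exact ⟨image_eq_zero_of_notMem_tsupport ht, image_eq_zero_of_notMem_tsupport h1,
    image_eq_zero_of_notMem_tsupport h2, image_eq_zero_of_notMem_tsupport h3,
    image_eq_zero_of_notMem_tsupport (hs _ h3)⟩

lemma hasCompactSupport_polyD (a b : ℝ) {ψ : ℝ → ℂ} (hψc : HasCompactSupport ψ) :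
    HasCompactSupport (polyD a b ψ) := by
  refine HasCompactSupport.intro hψc fun t ht => ?_
  obtain ⟨h0, -, h2, -, h4⟩ := deriv_eq_zero_of_notMem_tsupport ht
  simp [polyD, h0, h2, h4]

lemma memLp_toR (s : ℝ) {ψ : ℝ → ℂ} (hψ : ContDiff ℝ (⊤ : ℕ∞) ψ) (hψc : HasCompactSupport ψ) :
    MemLp (toR s ψ) 2 lebIoi := by
  have h : MemLp (extR s ψ) 2 lebIoi :=
    ((contDiff_extR s hψ hψc).continuous.memLp_of_hasCompactSupport
      (hasCompactSupport_extR s hψc) (μ := volume)).restrict _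
  exact (memLp_congr_ae (extR_eqOn s ψ).ae_lebIoi).1 h

lemma exists_mem_testGraph (a b : ℝ) {ψ : ℝ → ℂ} (hψ : ContDiff ℝ (⊤ : ℕ∞) ψ)
    (hψc : HasCompactSupport ψ) : ∃ p ∈ testGraph a b, (p.1 : ℝ → ℂ) =ᵐ[lebIoi] toR (3 / 2) ψ ∧
      (p.2 : ℝ → ℂ) =ᵐ[lebIoi] toR (-5 / 2) (polyD a b ψ) := by
  have h1 := memLp_toR (3 / 2) hψ hψc
  have h2 := memLp_toR (-5 / 2) (contDiff_polyD a b hψ) (hasCompactSupport_polyD a b hψc)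
  exact ⟨(h1.toLp _, h2.toLp _), ⟨ψ, hψ, hψc, h1.coeFn_toLp, h2.coeFn_toLp⟩,
    h1.coeFn_toLp, h2.coeFn_toLp⟩

lemma inner_toR (s : ℝ) {ψ : ℝ → ℂ} {u v : Lp ℂ 2 lebIoi} (hu : (u : ℝ → ℂ) =ᵐ[lebIoi] toR s ψ) :
    inner ℂ u v = ∫ t : ℝ, Complex.exp ((s + 1 / 2 : ℝ) * t) * lift v t * conj (ψ t) := by
  rw [inner_eq_integral_lift]
  refine integral_congr_ae ?_
  filter_upwards [lift_congr_ae hu] with t ht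
  rw [ht, lift_toR, map_mul, ← Complex.exp_conj, map_mul, Complex.conj_ofReal, Complex.conj_ofReal]
  ring

lemma deriv_conj (ψ : ℝ → ℂ) : deriv (fun t => conj (ψ t)) = fun t => conj (deriv ψ t) := by
  ext t
  exact deriv.star

lemma polyD_conj (a b : ℝ) (ψ : ℝ → ℂ) :
    polyD a b (fun t => conj (ψ t)) = fun t => conj (polyD a b ψ t) := by
  ext t
  simp [polyD, deriv_conj]

lemma contDiff_conj {ψ : ℝ → ℂ} (hψ : ContDiff ℝ (⊤ : ℕ∞) ψ) :
    ContDiff ℝ (⊤ : ℕ∞) (fun t => conj (ψ t)) := Complex.conjCLE.contDiff.comp hψ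

lemma hasCompactSupport_conj {ψ : ℝ → ℂ} (hψc : HasCompactSupport ψ) :
    HasCompactSupport (fun t => conj (ψ t)) := hψc.comp_left (g := fun z : ℂ => conj z) (by simp)

lemma measurable_Lp {μ : Measure ℝ} (u : Lp ℂ 2 μ) : Measurable (u : ℝ → ℂ) :=
  (Lp.stronglyMeasurable u).measurable

theorem mem_adjoint_testGraph_iff {a b : ℝ} {x : Lp ℂ 2 lebIoi × Lp ℂ 2 lebIoi} :
    x ∈ (Submodule.span ℂ (testGraph a b)).adjoint ↔ WeakSol a b (lift x.1) (lift x.2) := by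
  rw [Submodule.mem_adjoint_span_iff]
  constructor
  · intro h
    refine ⟨measurable_lift (measurable_Lp _), measurable_lift (measurable_Lp _),
      (memLp_lift_iff (measurable_Lp _)).2 (Lp.memLp _),
      (memLp_lift_iff (measurable_Lp _)).2 (Lp.memLp _), fun ψ hψ hψc => ?_⟩
    obtain ⟨p, hp, h1, h2⟩ := exists_mem_testGraph a b (contDiff_conj hψ)
      (hasCompactSupport_conj hψc)
    have := h p hp
    rw [inner_toR _ h1, inner_toR _ h2, polyD_conj] at this
    norm_num at this
    norm_num
    exact this
  · rintro h p ⟨ψ, hψ, hψc, h1, h2⟩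
    rw [inner_toR _ h1, inner_toR _ h2]
    have := h.weak _ (contDiff_conj hψ) (hasCompactSupport_conj hψc)
    rw [polyD_conj] at this
    norm_num at this
    norm_num
    exact this

/-- Integration by parts for `polyD`. -/
lemma integral_polyD_mul (a b : ℝ) {g h : ℝ → ℂ} (hg : ContDiff ℝ (⊤ : ℕ∞) g)
    (hh : ContDiff ℝ (⊤ : ℕ∞) h) (hc : HasCompactSupport h) :
    ∫ t, polyD a b g t * h t = ∫ t, g t * polyD a b h t := by
  have cg := continuous_polyD a b hg
  have ch := continuous_polyD a b hh
  have i1 : Integrable fun t => polyD a b g t * h t :=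
    (cg.mul hh.continuous).integrable_of_hasCompactSupport hc.mul_left
  have i2 : Integrable fun t => g t * polyD a b h t :=
    (hg.continuous.mul ch).integrable_of_hasCompactSupport (hasCompactSupport_polyD a b hc).mul_left
  have hB : HasCompactSupport (bdryForm a g h) := by
    refine HasCompactSupport.intro hc fun t ht => ?_
    obtain ⟨h0, h1, h2, h3, -⟩ := deriv_eq_zero_of_notMem_tsupport ht
    simp [bdryForm, h0, h1, h2, h3]
  have := integral_eq_zero_of_hasDerivAt_of_integrable (hasDerivAt_bdryForm a b hg hh)
    (i1.sub i2) ?_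
  · rw [integral_sub i1 i2, sub_eq_zero] at this
    exact this
  · refine Continuous.integrable_of_hasCompactSupport ?_ hB
    exact continuous_iff_continuousAt.2 fun t => (hasDerivAt_bdryForm a b hg hh t).continuousAt

lemma WeakSol.congr_ae {a b : ℝ} {f m f' m' : ℝ → ℂ} (h : WeakSol a b f m)
    (hf' : Measurable f') (hm' : Measurable m') (hf : f =ᵐ[volume] f') (hm : m =ᵐ[volume] m') :
    WeakSol a b f' m' := by
  refine ⟨hf', hm', (memLp_congr_ae hf).1 h.memLp_left, (memLp_congr_ae hm).1 h.memLp_right,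
    fun ψ hψ hψc => ?_⟩
  refine Eq.trans (integral_congr_ae ?_) ((h.weak ψ hψ hψc).trans (integral_congr_ae ?_))
  · filter_upwards [hf] with t ht
    rw [ht]
  · filter_upwards [hm] with t ht
    rw [ht]

lemma WeakSol.of_contDiff (a b : ℝ) {g : ℝ → ℂ} (hg : ContDiff ℝ (⊤ : ℕ∞) g)
    (hf : MemLp (fun t : ℝ => Complex.exp ((2 : ℝ) * t) * g t) 2)
    (hm : MemLp (fun t : ℝ => Complex.exp ((-2 : ℝ) * t) * polyD a b g t) 2) :
    WeakSol a b (fun t : ℝ => Complex.exp ((2 : ℝ) * t) * g t)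
      (fun t : ℝ => Complex.exp ((-2 : ℝ) * t) * polyD a b g t) := by
  refine ⟨(contDiff_exp_mul 2 hg).continuous.measurable,
    (contDiff_exp_mul (-2) (contDiff_polyD a b hg)).continuous.measurable, hf, hm,
    fun ψ hψ hψc => ?_⟩
  have e : ∀ t : ℝ, Complex.exp ((2 : ℝ) * t) * Complex.exp ((-2 : ℝ) * t) = 1 := fun t => by
    rw [← Complex.exp_add]
    simp
  calc _ = ∫ t, g t * polyD a b ψ t := by
        congr 1
        ext t
        linear_combination (g t * polyD a b ψ t) * e t
    _ = ∫ t, polyD a b g t * ψ t := (integral_polyD_mul a b hg hψ hψc).symm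
    _ = _ := by
        congr 1
        ext t
        linear_combination (- polyD a b g t * ψ t) * e t

lemma testGraph_le_adjoint (a b : ℝ) :
    Submodule.span ℂ (testGraph a b) ≤ (Submodule.span ℂ (testGraph a b)).adjoint := by
  rw [Submodule.span_le]
  rintro p ⟨ψ, hψ, hψc, h1, h2⟩
  rw [SetLike.mem_coe, mem_adjoint_testGraph_iff]
  have c1 := contDiff_exp_mul 2 hψ
  have c2 := contDiff_exp_mul (-2) (contDiff_polyD a b hψ)
  refine (WeakSol.of_contDiff a b hψ (c1.continuous.memLp_of_hasCompactSupport hψc.mul_left)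
    (c2.continuous.memLp_of_hasCompactSupport (hasCompactSupport_polyD a b hψc).mul_left)).congr_ae
    (measurable_lift (measurable_Lp _)) (measurable_lift (measurable_Lp _)) ?_ ?_
  · refine EventuallyEq.trans (Eventually.of_forall fun t => ?_) (lift_congr_ae h1).symm
    rw [lift_toR]
    norm_num
  · refine EventuallyEq.trans (Eventually.of_forall fun t => ?_) (lift_congr_ae h2).symm
    rw [lift_toR]
    norm_num

lemma dense_testGraph (a b : ℝ) : Dense ((Submodule.span ℂ (testGraph a b)).map
    (LinearMap.fst ℂ (Lp ℂ 2 lebIoi) (Lp ℂ 2 lebIoi)) : Set (Lp ℂ 2 lebIoi)) := by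
  rw [Submodule.dense_iff_topologicalClosure_eq_top, Submodule.topologicalClosure_eq_top_iff,
    Submodule.eq_bot_iff]
  intro w hw
  rw [Submodule.mem_orthogonal] at hw
  have hm := (memLp_lift_iff (measurable_Lp w)).2 (Lp.memLp w)
  have h0 : ∀ᵐ t : ℝ, Complex.exp ((2 : ℝ) * t) * lift w t = 0 := by
    refine ae_eq_zero_of_integral_contDiff_smul_eq_zero (locallyIntegrable_exp_mul 2 hm)
      fun θ hθ hθc => ?_
    have hψ : ContDiff ℝ (⊤ : ℕ∞) fun t => (θ t : ℂ) := Complex.ofRealCLM.contDiff.comp hθ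
    have hψc : HasCompactSupport fun t => (θ t : ℂ) :=
      hθc.comp_left (g := fun x : ℝ => (x : ℂ)) (by simp)
    obtain ⟨p, hp, h1, -⟩ := exists_mem_testGraph a b hψ hψc
    have := hw p.1 ⟨p, Submodule.subset_span hp, rfl⟩
    rw [inner_toR _ h1] at this
    rw [← this]
    refine integral_congr_ae (Eventually.of_forall fun t => ?_)
    simp only [Complex.real_smul, Complex.conj_ofReal]
    norm_num
    ring
  rw [← inner_self_eq_zero (𝕜 := ℂ), inner_eq_integral_lift]
  refine integral_eq_zero_of_ae ?_
  filter_upwards [h0] with t ht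
  have : lift w t = 0 := (mul_eq_zero.1 ht).resolve_left (Complex.exp_ne_zero _)
  simp [this]

theorem essentiallySelfAdjoint_tau2op_iff (c₁ c₂ : ℝ) {a b : ℝ} (ha : a = 2 * c₁ - 5 / 2)
    (hb : b = 9 / 16 + 3 * c₁ / 2 + c₂) : EssentiallySelfAdjoint (tau2op c₁ c₂) ↔
      ∀ x y : Lp ℂ 2 lebIoi × Lp ℂ 2 lebIoi, WeakSol a b (lift x.1) (lift x.2) →
        WeakSol a b (lift y.1) (lift y.2) → inner ℂ y.2 x.1 = inner ℂ y.1 x.2 := by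
  rw [tau2op, opOnHalfLine, graphOnHalfLine_tau2exp, ← ha, ← hb,
    essentiallySelfAdjoint_toLinearPMap_iff (dense_testGraph a b) (testGraph_le_adjoint a b)]
  simp only [mem_adjoint_testGraph_iff]
  exact ⟨fun h x y hx hy => h x hx y hy, fun h x hx y hy => h x y hx hy⟩

lemma WeakSol.conj {a b : ℝ} {f m : ℝ → ℂ} (h : WeakSol a b f m) :
    WeakSol a b (fun t => conj (f t)) (fun t => conj (m t)) := by
  have hc : Measurable fun z : ℂ => conj z := Complex.continuous_conj.measurable
  refine ⟨hc.comp h.measurable_left, hc.comp h.measurable_right, h.memLp_left.star,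
    h.memLp_right.star, fun ψ hψ hψc => ?_⟩
  have := congrArg (starRingEnd ℂ) (h.weak _ (contDiff_conj hψ) (hasCompactSupport_conj hψc))
  rw [← integral_conj, ← integral_conj, polyD_conj] at this
  simpa [← Complex.exp_conj, map_ofNat (starRingEnd ℂ) 2] using this

theorem essentiallySelfAdjoint_of_factorization (c₁ c₂ : ℝ) {a b : ℝ} (ha : a = 2 * c₁ - 5 / 2)
    (hb : b = 9 / 16 + 3 * c₁ / 2 + c₂) {p q : ℂ} (hp : 2 ≤ p.re) (hq : 2 ≤ q.re)
    (hpa : (a : ℂ) = -(p ^ 2 + q ^ 2)) (hpb : (b : ℂ) = p ^ 2 * q ^ 2) :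
    EssentiallySelfAdjoint (tau2op c₁ c₂) := by
  rw [essentiallySelfAdjoint_tau2op_iff c₁ c₂ ha hb]
  intro x y hx hy
  rw [inner_eq_integral_lift, inner_eq_integral_lift]
  exact (hx.integral_mul_eq hy.conj hp hq hpa hpb).symm

lemma measurable_toR (s : ℝ) {f : ℝ → ℂ} (hf : Measurable f) : Measurable (toR s f) := by
  unfold toR
  exact Measurable.mul (by fun_prop) (hf.comp Real.measurable_log)

lemma exists_lift_eq {f : ℝ → ℂ} (hf : Measurable f) (hf2 : MemLp f 2) :
    ∃ u : Lp ℂ 2 lebIoi, lift u =ᵐ[volume] f := by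
  have he : lift (toR (-1 / 2) f) = f := by
    ext t
    rw [lift_toR]
    norm_num
  have h : MemLp (toR (-1 / 2) f) 2 lebIoi := by
    rw [← memLp_lift_iff (measurable_toR _ hf), he]
    exact hf2
  refine ⟨h.toLp _, ?_⟩
  have := lift_congr_ae h.coeFn_toLp
  rwa [he] at this

lemma WeakSol.exists_lift {a b : ℝ} {f m : ℝ → ℂ} (h : WeakSol a b f m) :
    ∃ x : Lp ℂ 2 lebIoi × Lp ℂ 2 lebIoi, WeakSol a b (lift x.1) (lift x.2) ∧
      lift x.1 =ᵐ[volume] f ∧ lift x.2 =ᵐ[volume] m := by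
  obtain ⟨u, hu⟩ := exists_lift_eq h.measurable_left h.memLp_left
  obtain ⟨v, hv⟩ := exists_lift_eq h.measurable_right h.memLp_right
  exact ⟨(u, v), h.congr_ae (measurable_lift (measurable_Lp _)) (measurable_lift (measurable_Lp _))
    hu.symm hv.symm, hu, hv⟩

lemma integral_mul_eq_of_essentiallySelfAdjoint {c₁ c₂ a b : ℝ} (ha : a = 2 * c₁ - 5 / 2)
    (hb : b = 9 / 16 + 3 * c₁ / 2 + c₂) (hE : EssentiallySelfAdjoint (tau2op c₁ c₂))
    {f m f' m' : ℝ → ℂ} (h : WeakSol a b f m) (h' : WeakSol a b f' m') :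
    ∫ t, f t * m' t = ∫ t, m t * f' t := by
  rw [essentiallySelfAdjoint_tau2op_iff c₁ c₂ ha hb] at hE
  obtain ⟨x, hx, hx1, hx2⟩ := h.exists_lift
  obtain ⟨y, hy, hy1, hy2⟩ := h'.conj.exists_lift
  have := hE x y hx hy
  rw [inner_eq_integral_lift, inner_eq_integral_lift] at this
  refine Eq.trans (integral_congr_ae ?_) (this.trans (integral_congr_ae ?_))
  · filter_upwards [hx1, hy2] with t e1 e2
    rw [e1, e2, Complex.conj_conj]
  · filter_upwards [hx2, hy1] with t e1 e2
    rw [e1, e2, Complex.conj_conj]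

/-- The function `e^{wt} η(t)`. -/
def expMul (w : ℂ) (η : ℝ → ℂ) : ℝ → ℂ := fun t => Complex.exp (w * t) * η t

lemma deriv_expMul (w : ℂ) {η η' : ℝ → ℂ} (hη : ∀ t, HasDerivAt η (η' t) t) :
    deriv (expMul w η) = expMul w (fun t => w * η t + η' t) := by
  ext t
  refine ((hasDerivAt_cexp_mul w t).mul (hη t)).deriv.trans ?_
  simp only [expMul]
  ring

lemma deriv_expMul_two_three (w : ℂ) {η η₁ η₂ η₃ : ℝ → ℂ} (h₁ : ∀ t, HasDerivAt η (η₁ t) t)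
    (h₂ : ∀ t, HasDerivAt η₁ (η₂ t) t) (h₃ : ∀ t, HasDerivAt η₂ (η₃ t) t) :
    deriv (deriv (expMul w η)) = expMul w (fun t => w ^ 2 * η t + 2 * w * η₁ t + η₂ t) ∧
    deriv (deriv (deriv (expMul w η))) =
      expMul w (fun t => w ^ 3 * η t + 3 * w ^ 2 * η₁ t + 3 * w * η₂ t + η₃ t) := by
  have d1 : ∀ t, HasDerivAt (fun t => w * η t + η₁ t) (w * η₁ t + η₂ t) t := fun t =>
    ((h₁ t).const_mul w).add (h₂ t)
  have d2 : ∀ t, HasDerivAt (fun t => w ^ 2 * η t + 2 * w * η₁ t + η₂ t)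
      (w ^ 2 * η₁ t + 2 * w * η₂ t + η₃ t) t := fun t =>
    (((h₁ t).const_mul _).add ((h₂ t).const_mul _)).add (h₃ t)
  have e : deriv (deriv (expMul w η)) =
      expMul w (fun t => w ^ 2 * η t + 2 * w * η₁ t + η₂ t) := by
    rw [deriv_expMul w h₁, deriv_expMul w d1]
    ext t
    simp only [expMul]
    ring
  refine ⟨e, ?_⟩
  rw [e, deriv_expMul w d2]
  ext t
  simp only [expMul]
  ring

lemma polyD_expMul (a b : ℝ) (w : ℂ) {η η₁ η₂ η₃ η₄ : ℝ → ℂ} (h₁ : ∀ t, HasDerivAt η (η₁ t) t)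
    (h₂ : ∀ t, HasDerivAt η₁ (η₂ t) t) (h₃ : ∀ t, HasDerivAt η₂ (η₃ t) t)
    (h₄ : ∀ t, HasDerivAt η₃ (η₄ t) t) (t : ℝ) :
    polyD a b (expMul w η) t = Complex.exp (w * t) * ((w ^ 4 + a * w ^ 2 + b) * η t
      + (4 * w ^ 3 + 2 * a * w) * η₁ t + (6 * w ^ 2 + a) * η₂ t + 4 * w * η₃ t + η₄ t) := by
  obtain ⟨e2, e3⟩ := deriv_expMul_two_three w h₁ h₂ h₃
  have h : ∀ t, HasDerivAt
      (fun t => w ^ 3 * η t + 3 * w ^ 2 * η₁ t + 3 * w * η₂ t + η₃ t)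
      (w ^ 3 * η₁ t + 3 * w ^ 2 * η₂ t + 3 * w * η₃ t + η₄ t) t := fun t =>
    ((((h₁ t).const_mul _).add ((h₂ t).const_mul _)).add ((h₃ t).const_mul _)).add (h₄ t)
  simp only [polyD]
  rw [e3, e2, deriv_expMul w h]
  simp only [expMul]
  ring

lemma bdryForm_expMul (a : ℝ) (z : ℂ) {η η₁ η₂ η₃ : ℝ → ℂ} (h₁ : ∀ t, HasDerivAt η (η₁ t) t)
    (h₂ : ∀ t, HasDerivAt η₁ (η₂ t) t) (h₃ : ∀ t, HasDerivAt η₂ (η₃ t) t) (t : ℝ) :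
    bdryForm a (expMul z 1) (expMul (-z) η) t =
      (4 * z ^ 3 + 2 * a * z) * η t - (6 * z ^ 2 + a) * η₁ t + 4 * z * η₂ t - η₃ t := by
  obtain ⟨e2, e3⟩ := deriv_expMul_two_three (-z) h₁ h₂ h₃
  obtain ⟨f2, f3⟩ := deriv_expMul_two_three (η := 1) (η₁ := fun _ => 0) (η₂ := fun _ => 0)
    (η₃ := fun _ => 0) z (fun t => hasDerivAt_const t 1) (fun t => hasDerivAt_const t 0)
    (fun t => hasDerivAt_const t 0)
  have e : Complex.exp (z * t) * Complex.exp (-z * t) = 1 := by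
    rw [← Complex.exp_add]; simp
  simp only [bdryForm]
  rw [e3, e2, f3, f2, deriv_expMul (-z) h₁, deriv_expMul (η := 1) (η' := fun _ => 0) z
    (fun t => hasDerivAt_const t 1)]
  simp only [expMul, Pi.one_apply]
  linear_combination ((4 * z ^ 3 + 2 * a * z) * η t - (6 * z ^ 2 + a) * η₁ t
    + 4 * z * η₂ t - η₃ t) * e

/-- A smooth function equal to `1` on `(-∞, -1]` and to `0` on `[0, ∞)`. -/
def leftCutoff : ℝ → ℂ := fun t => (Real.smoothTransition (-t) : ℂ)

lemma contDiff_leftCutoff : ContDiff ℝ (⊤ : ℕ∞) leftCutoff :=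
  Complex.ofRealCLM.contDiff.comp (Real.smoothTransition.contDiff.comp contDiff_neg)

/-- The function `t ^ n e^{wt}`, cut off to the left half-line. -/
def cutExp (w : ℂ) (n : ℕ) : ℝ → ℂ := expMul w (fun t => (t : ℂ) ^ n * leftCutoff t)

lemma contDiff_cutExp (w : ℂ) (n : ℕ) : ContDiff ℝ (⊤ : ℕ∞) (cutExp w n) := by
  have h : ContDiff ℝ (⊤ : ℕ∞) (fun t : ℝ => (t : ℂ)) := Complex.ofRealCLM.contDiff
  exact ((contDiff_const.mul h).cexp).mul ((h.pow n).mul contDiff_leftCutoff)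

lemma cutExp_eqOn_left (w : ℂ) (n : ℕ) :
    Set.EqOn (cutExp w n) (expMul w (fun t => (t : ℂ) ^ n)) (Set.Iio (-1)) := by
  intro t ht
  have : leftCutoff t = 1 := by
    simp only [leftCutoff]
    rw [Real.smoothTransition.one_of_one_le (by linarith [Set.mem_Iio.1 ht])]
    simp
  simp [cutExp, expMul, this]

lemma cutExp_eq_zero (w : ℂ) (n : ℕ) {t : ℝ} (ht : 0 ≤ t) : cutExp w n t = 0 := by
  have : leftCutoff t = 0 := by
    simp only [leftCutoff]
    rw [Real.smoothTransition.zero_of_nonpos (by linarith)]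
    simp
  simp [cutExp, expMul, this]

lemma Set.EqOn.polyD {g h : ℝ → ℂ} {s : Set ℝ} (hs : IsOpen s) (H : Set.EqOn g h s) (a b : ℝ) :
    Set.EqOn (_root_.polyD a b g) (_root_.polyD a b h) s := by
  have h1 := H.deriv hs
  have h2 := h1.deriv hs
  have h3 := h2.deriv hs
  have h4 := h3.deriv hs
  intro t ht
  simp only [_root_.polyD, H ht, h2 ht, h4 ht]

lemma Set.EqOn.bdryForm {g h k l : ℝ → ℂ} {s : Set ℝ} (hs : IsOpen s) (H : Set.EqOn g h s)
    (K : Set.EqOn k l s) (a : ℝ) :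
    Set.EqOn (_root_.bdryForm a g k) (_root_.bdryForm a h l) s := by
  have h1 := H.deriv hs
  have h2 := h1.deriv hs
  have h3 := h2.deriv hs
  have k1 := K.deriv hs
  have k2 := k1.deriv hs
  have k3 := k2.deriv hs
  intro t ht
  simp only [_root_.bdryForm, H ht, h1 ht, h2 ht, h3 ht, K ht, k1 ht, k2 ht, k3 ht]

lemma integrableOn_pow_mul_exp {r : ℝ} (hr : 0 < r) (n : ℕ) :
    IntegrableOn (fun t : ℝ => t ^ n * Real.exp (-r * t)) (Set.Ioi 0) := by
  refine integrable_of_isBigO_exp_neg (half_pos hr) (by fun_prop) ?_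
  have h := (isLittleO_pow_exp_pos_mul_atTop n (half_pos hr)).isBigO.mul
    (Asymptotics.isBigO_refl (fun t : ℝ => Real.exp (-r * t)) atTop)
  refine h.congr_right fun t => ?_
  rw [← Real.exp_add]
  congr 1
  ring

lemma memLp_exp_mul_cutExp {w : ℂ} (hw : -2 < w.re) (n : ℕ) :
    MemLp (fun t : ℝ => Complex.exp ((2 : ℝ) * t) * cutExp w n t) 2 := by
  have hc : Continuous (fun t : ℝ => Complex.exp ((2 : ℝ) * t) * cutExp w n t) :=
    (contDiff_exp_mul 2 (contDiff_cutExp w n)).continuous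
  rw [memLp_two_iff_integrable_sq_norm hc.aestronglyMeasurable]
  have hc2 := (hc.norm.pow 2).comp continuous_neg
  suffices h : Integrable (fun t : ℝ => ‖Complex.exp ((2 : ℝ) * (-t : ℝ)) * cutExp w n (-t)‖ ^ 2) by
    simpa using h.comp_neg
  rw [← integrableOn_iff_integrable_of_support_subset (s := Set.Ioi 0)]
  · refine (integrableOn_pow_mul_exp (r := 2 * (2 + w.re)) (by linarith) (2 * n)).mono'
      hc2.aestronglyMeasurable ?_
    refine (ae_restrict_mem measurableSet_Ioi).mono fun t ht => ?_
    have ht0 : 0 < t := ht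
    have hl : ‖leftCutoff (-t)‖ ≤ 1 := by
      simp only [leftCutoff, Complex.norm_real, neg_neg]
      rw [Real.norm_of_nonneg (Real.smoothTransition.nonneg _)]
      exact Real.smoothTransition.le_one _
    have e : ‖Complex.exp ((2 : ℝ) * (-t : ℝ)) * cutExp w n (-t)‖
        ≤ Real.exp (-(2 + w.re) * t) * t ^ n := by
      simp only [cutExp, expMul, norm_mul, norm_pow, Complex.norm_exp, Complex.norm_real]
      rw [← mul_assoc, ← Real.exp_add, ← mul_assoc]
      refine (mul_le_of_le_one_right (by positivity) hl).trans (le_of_eq ?_)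
      rw [norm_neg, Real.norm_of_nonneg ht0.le]
      congr 2
      simp
      ring
    rw [Real.norm_of_nonneg (by positivity)]
    refine (pow_le_pow_left₀ (norm_nonneg _) e 2).trans (le_of_eq ?_)
    rw [mul_pow, ← Real.exp_nat_mul, mul_comm, ← pow_mul, mul_comm n]
    congr 2
    push_cast
    ring
  · intro t ht
    by_contra h
    refine ht ?_
    have : cutExp w n (-t) = 0 := cutExp_eq_zero w n (by simpa using h)
    simp [this]

lemma hasCompactSupport_polyD_cutExp {a b : ℝ} {w : ℂ} {n : ℕ}
    (h : ∀ t, polyD a b (expMul w (fun t => (t : ℂ) ^ n)) t = 0) :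
    HasCompactSupport (polyD a b (cutExp w n)) := by
  refine HasCompactSupport.intro (isCompact_Icc (a := -1) (b := 0)) fun t ht => ?_
  rw [Set.mem_Icc, not_and_or, not_le, not_le] at ht
  rcases ht with ht | ht
  · rw [(cutExp_eqOn_left w n).polyD isOpen_Iio a b ht, h]
  · have : Set.EqOn (cutExp w n) (fun _ => 0) (Set.Ioi 0) := fun s hs =>
      cutExp_eq_zero w n (le_of_lt hs)
    rw [this.polyD isOpen_Ioi a b ht]
    simp [polyD]

lemma weakSol_cutExp {a b : ℝ} {w : ℂ} {n : ℕ} (hw : -2 < w.re)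
    (h : ∀ t, polyD a b (expMul w (fun t => (t : ℂ) ^ n)) t = 0) :
    WeakSol a b (fun t : ℝ => Complex.exp ((2 : ℝ) * t) * cutExp w n t)
      (fun t : ℝ => Complex.exp ((-2 : ℝ) * t) * polyD a b (cutExp w n) t) :=
  WeakSol.of_contDiff a b (contDiff_cutExp w n) (memLp_exp_mul_cutExp hw n)
    ((contDiff_exp_mul (-2) (contDiff_polyD a b (contDiff_cutExp w n))).continuous
      |>.memLp_of_hasCompactSupport (hasCompactSupport_polyD_cutExp h).mul_left)

lemma bdryForm_eq_zero {c₁ c₂ a b : ℝ} (ha : a = 2 * c₁ - 5 / 2)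
    (hb : b = 9 / 16 + 3 * c₁ / 2 + c₂) (hE : EssentiallySelfAdjoint (tau2op c₁ c₂))
    {w w' : ℂ} {n n' : ℕ} (hw : -2 < w.re) (hw' : -2 < w'.re)
    (h : ∀ t, polyD a b (expMul w (fun t => (t : ℂ) ^ n)) t = 0)
    (h' : ∀ t, polyD a b (expMul w' (fun t => (t : ℂ) ^ n')) t = 0) {B : ℂ}
    (hB : ∀ t, bdryForm a (expMul w (fun t => (t : ℂ) ^ n))
      (expMul w' (fun t => (t : ℂ) ^ n')) t = B) : B = 0 := by
  have key := integral_mul_eq_of_essentiallySelfAdjoint ha hb hE (weakSol_cutExp hw h)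
    (weakSol_cutExp hw' h')
  have e : ∀ t : ℝ, Complex.exp ((2 : ℝ) * t) * Complex.exp ((-2 : ℝ) * t) = 1 := fun t => by
    rw [← Complex.exp_add]; simp
  have e1 : ∀ t : ℝ, Complex.exp ((2 : ℝ) * t) * cutExp w n t *
      (Complex.exp ((-2 : ℝ) * t) * polyD a b (cutExp w' n') t)
      = cutExp w n t * polyD a b (cutExp w' n') t := fun t => by
    linear_combination (cutExp w n t * polyD a b (cutExp w' n') t) * e t
  have e2 : ∀ t : ℝ, Complex.exp ((-2 : ℝ) * t) * polyD a b (cutExp w n) t *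
      (Complex.exp ((2 : ℝ) * t) * cutExp w' n' t)
      = polyD a b (cutExp w n) t * cutExp w' n' t := fun t => by
    linear_combination (polyD a b (cutExp w n) t * cutExp w' n' t) * e t
  simp only [e1, e2] at key
  have cw := contDiff_cutExp w n
  have cw' := contDiff_cutExp w' n'
  have i1 : Integrable (fun t => cutExp w n t * polyD a b (cutExp w' n') t) :=
    (cw.continuous.mul (continuous_polyD a b cw')).integrable_of_hasCompactSupport
      (hasCompactSupport_polyD_cutExp h').mul_left
  have i2 : Integrable (fun t => polyD a b (cutExp w n) t * cutExp w' n' t) :=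
    ((continuous_polyD a b cw).mul cw'.continuous).integrable_of_hasCompactSupport
      (hasCompactSupport_polyD_cutExp h).mul_right
  have hbot : Tendsto (bdryForm a (cutExp w n) (cutExp w' n')) atBot (𝓝 B) := by
    refine tendsto_const_nhds.congr' ?_
    filter_upwards [eventually_lt_atBot (-1)] with t ht
    rw [(cutExp_eqOn_left w n).bdryForm isOpen_Iio (cutExp_eqOn_left w' n') a ht, hB]
  have htop : Tendsto (bdryForm a (cutExp w n) (cutExp w' n')) atTop (𝓝 0) := by
    refine tendsto_const_nhds.congr' ?_
    filter_upwards [eventually_gt_atTop 0] with t ht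
    have z1 : Set.EqOn (cutExp w n) (fun _ => 0) (Set.Ioi 0) := fun s hs =>
      cutExp_eq_zero w n (le_of_lt hs)
    have z2 : Set.EqOn (cutExp w' n') (fun _ => 0) (Set.Ioi 0) := fun s hs =>
      cutExp_eq_zero w' n' (le_of_lt hs)
    rw [z1.bdryForm isOpen_Ioi z2 a ht]
    simp [bdryForm]
  have hint := integral_of_hasDerivAt_of_tendsto (hasDerivAt_bdryForm a b cw cw') (i2.sub i1)
    hbot htop
  rw [integral_sub i2 i1, key, sub_self] at hint
  simpa using hint.symm

lemma not_essentiallySelfAdjoint_of_root {c₁ c₂ a b : ℝ} (ha : a = 2 * c₁ - 5 / 2)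
    (hb : b = 9 / 16 + 3 * c₁ / 2 + c₂) {z : ℂ} (hz : |z.re| < 2)
    (hroot : z ^ 4 + a * z ^ 2 + b = 0) : ¬ EssentiallySelfAdjoint (tau2op c₁ c₂) := by
  intro hE
  obtain ⟨hz1, hz2⟩ := abs_lt.1 hz
  have hz' : -2 < (-z).re := by simpa using hz2
  have p0 : (fun t : ℝ => (t : ℂ) ^ 0) = 1 := by ext; simp
  have p1 : (fun t : ℝ => (t : ℂ) ^ 1) = fun t : ℝ => (t : ℂ) := by ext; simp
  have d0 : ∀ (c : ℂ) (t : ℝ), HasDerivAt (fun _ : ℝ => c) 0 t := fun c t => hasDerivAt_const t c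
  have d0' : ∀ t : ℝ, HasDerivAt (1 : ℝ → ℂ) ((fun _ => 0 : ℝ → ℂ) t) t :=
    fun t => hasDerivAt_const t 1
  have d1 : ∀ t : ℝ, HasDerivAt (fun t : ℝ => (t : ℂ)) 1 t := fun t =>
    Complex.ofRealCLM.hasDerivAt
  have hG : ∀ t, polyD a b (expMul z (fun t => (t : ℂ) ^ 0)) t = 0 := fun t => by
    rw [p0, polyD_expMul a b z d0' (d0 0) (d0 0) (d0 0)]
    simp [hroot]
  by_cases hp : 4 * z ^ 3 + 2 * a * z = 0
  · by_cases hq : 6 * z ^ 2 + a = 0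
    · have hz0 : z = 0 := by
        have : z ^ 3 = 0 := by linear_combination (-1 / 8) * hp + (z / 4) * hq
        simpa using this
      have ha0 : (a : ℂ) = 0 := by simpa [hz0] using hq
      have d3 : ∀ t : ℝ, HasDerivAt (fun t : ℝ => (t : ℂ) ^ 3) (3 * (t : ℂ) ^ 2) t := fun t => by
        refine ((d1 t).pow 3).congr_deriv ?_
        norm_num
      have d2 : ∀ t : ℝ, HasDerivAt (fun t : ℝ => 3 * (t : ℂ) ^ 2) (6 * (t : ℂ)) t := fun t => by
        refine (((d1 t).pow 2).const_mul 3).congr_deriv ?_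
        norm_num
        ring
      have d1' : ∀ t : ℝ, HasDerivAt (fun t : ℝ => 6 * (t : ℂ)) 6 t := fun t => by
        simpa using (d1 t).const_mul 6
      have := bdryForm_eq_zero (n := 0) (n' := 3) (B := -6) ha hb hE hz1 hz' hG (fun t => by
        rw [polyD_expMul a b (-z) d3 d2 d1' (d0 6)]
        have hb0 : (b : ℂ) = 0 := by simpa [hz0] using hroot
        simp [hz0, ha0, hb0]) (fun t => by
        rw [p0, bdryForm_expMul a z d3 d2 d1']
        simp [hz0, ha0])
      norm_num at this
    · have := bdryForm_eq_zero (n := 0) (n' := 1) (B := -(6 * z ^ 2 + a)) ha hb hE hz1 hz' hG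
        (fun t => by
          rw [p1, polyD_expMul a b (-z) d1 (d0 1) (d0 0) (d0 0)]
          linear_combination Complex.exp (-z * t) * (t * hroot - hp)) (fun t => by
          rw [p0, p1, bdryForm_expMul a z d1 (d0 1) (d0 0)]
          linear_combination (t : ℂ) * hp)
      exact hq (neg_eq_zero.1 this)
  · have := bdryForm_eq_zero (n := 0) (n' := 0) (B := 4 * z ^ 3 + 2 * a * z) ha hb hE hz1 hz' hG
      (fun t => by
        rw [p0, polyD_expMul a b (-z) d0' (d0 0) (d0 0) (d0 0)]
        simp [Even.neg_pow (by decide : Even 4), hroot]) (fun t => by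
        rw [p0, bdryForm_expMul a z d0' (d0 0) (d0 0)]
        simp)
    exact hp this

theorem stmt1 (c₁ c₂ : ℝ) :
    EssentiallySelfAdjoint (tau2op c₁ c₂) ↔
      ((-11/4 ≤ c₁ → 45 + 12 * c₁ + c₁ ^ 2 ≤ c₂) ∧
        (c₁ < -11/4 → -105/16 - (19/2) * c₁ ≤ c₂)) := by
  obtain ⟨a, ha⟩ : ∃ a, a = 2 * c₁ - 5 / 2 := ⟨_, rfl⟩
  obtain ⟨b, hb⟩ : ∃ b, b = 9 / 16 + 3 * c₁ / 2 + c₂ := ⟨_, rfl⟩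
  have key : ((-11/4 ≤ c₁ → 45 + 12 * c₁ + c₁ ^ 2 ≤ c₂) ∧
      (c₁ < -11/4 → -105/16 - (19/2) * c₁ ≤ c₂)) ↔
      ((-8 ≤ a → (a / 2 + 8) ^ 2 ≤ b) ∧ (a < -8 → 0 ≤ 16 + 4 * a + b)) := by
    subst ha hb
    refine and_congr (imp_congr ?_ ?_) (imp_congr ?_ ?_) <;>
      constructor <;> intro h <;> nlinarith
  rw [key]
  refine ⟨fun hE => ?_, fun ⟨h1, h2⟩ => ?_⟩
  · by_contra h
    obtain ⟨z, hz, hroot⟩ := exists_root h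
    exact not_essentiallySelfAdjoint_of_root ha hb hz hroot hE
  · obtain ⟨p, q, hp, hq, hpa, hpb⟩ := exists_factorization h1 h2
    exact essentiallySelfAdjoint_of_factorization c₁ c₂ ha hb hp hq hpa hpb
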